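/- Let 0 < δ′ < δ″ < 1 and let u be an admissible map with ‖u‖ ≠ 0 and D_{δ″}(u) = 0. Then the rescaled map v = (δ′/δ″)·u satisfies D_{δ′}(v) = 0, ‖v‖ ≠ 0, and E(u) − E(v) > (1 − δ″)·r(δ″)²·(δ′/δ″)·(1 − δ′/δ″). (This yields strict monotone increase of the depth function d(δ) on (0,1].) -/

import Mathlib

open MeasureTheory Real Filter

/-- x-partial derivative of a map `u : ℝ² → ℝ³`. -/
noncomputable def pderivX (u : ℝ × ℝ → Fin 3 → ℝ) (p : ℝ × ℝ) : Fin 3 → ℝ :=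
  fderiv ℝ u p (1, 0)

/-- y-partial derivative of a map `u : ℝ² → ℝ³`. -/
noncomputable def pderivY (u : ℝ × ℝ → Fin 3 → ℝ) (p : ℝ × ℝ) : Fin 3 → ℝ :=
  fderiv ℝ u p (0, 1)

/-- Euclidean dot product on `ℝ³`. -/
def dot3 (a b : Fin 3 → ℝ) : ℝ := ∑ i, a i * b i

/-- Squared Dirichlet norm `‖u‖² = ∫_Ω |∇u|²`. -/
noncomputable def dirEnergy (Ω : Set (ℝ × ℝ)) (u : ℝ × ℝ → Fin 3 → ℝ) : ℝ :=
  ∫ p in Ω, (dot3 (pderivX u p) (pderivX u p) + dot3 (pderivY u p) (pderivY u p))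

/-- Dirichlet norm `‖u‖`. -/
noncomputable def dnorm (Ω : Set (ℝ × ℝ)) (u : ℝ × ℝ → Fin 3 → ℝ) : ℝ :=
  Real.sqrt (dirEnergy Ω u)

/-- Volume functional `V(u) = ∫_Ω u · (u_x ∧ u_y)`. -/
noncomputable def vol (Ω : Set (ℝ × ℝ)) (u : ℝ × ℝ → Fin 3 → ℝ) : ℝ :=
  ∫ p in Ω, dot3 (u p) (crossProduct (pderivX u p) (pderivY u p))

/-- An admissible map: smooth with compact support contained in `Ω`. -/
def IsAdmissible (Ω : Set (ℝ × ℝ)) (u : ℝ × ℝ → Fin 3 → ℝ) : Prop :=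
  ContDiff ℝ (⊤ : ℕ∞) u ∧ HasCompactSupport u ∧ tsupport u ⊆ Ω

/-- Energy functional `E(u) = (1/2)‖u‖² + (2H/3)·V(u)`. -/
noncomputable def Efun (Ω : Set (ℝ × ℝ)) (H : ℝ) (u : ℝ × ℝ → Fin 3 → ℝ) : ℝ :=
  (1 / 2) * dirEnergy Ω u + (2 * H / 3) * vol Ω u

/-- Modified Nehari functional `D_δ(u) = δ‖u‖² + 2H·V(u)`; `D = D₁`. -/
noncomputable def Dfun (Ω : Set (ℝ × ℝ)) (H δ : ℝ) (u : ℝ × ℝ → Fin 3 → ℝ) : ℝ :=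
  δ * dirEnergy Ω u + 2 * H * vol Ω u

/-- The radius `r(δ) = 2√(2π)·δ/H`. -/
noncomputable def rPW (H δ : ℝ) : ℝ := 2 * Real.sqrt (2 * Real.pi) * δ / H

/-- The coefficient `a(δ) = 1/2 − δ/3`. -/
noncomputable def aPW (δ : ℝ) : ℝ := 1 / 2 - δ / 3

open scoped ENNReal Pointwise Topology NNReal

theorem bm_one_dim_compact {K L : Set ℝ} (hK : IsCompact K) (hL : IsCompact L)
    (hKn : K.Nonempty) (hLn : L.Nonempty) :
    volume K + volume L ≤ volume (K + L) := by
  obtain ⟨x, hxK, hx⟩ := hK.exists_isGreatest hKn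
  obtain ⟨y, hyL, hy⟩ := hL.exists_isLeast hLn
  have h1 : volume ((fun z => z + y) '' K) = volume K := by simp
  have h2 : volume ((fun z => x + z) '' L) = volume L := by simp
  have hm1 : IsCompact ((fun z => z + y) '' K) := hK.image (by fun_prop)
  have hm2 : IsCompact ((fun z => x + z) '' L) := hL.image (by fun_prop)
  rw [← h1, ← h2, ← measure_union₀ hm2.measurableSet.nullMeasurableSet]
  · apply measure_mono
    rintro _ (⟨z, hz, rfl⟩ | ⟨z, hz, rfl⟩)
    · exact Set.add_mem_add hz hyL
    · exact Set.add_mem_add hxK hz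
  · refine measure_mono_null (t := {x + y}) ?_ (by simp)
    rintro _ ⟨⟨z, hz, rfl⟩, ⟨w, hw, hwz⟩⟩
    have := hx hz
    have := hy hw
    simp only [Set.mem_singleton_iff] at *
    linarith

theorem bm_one_dim' {A B C : Set ℝ} (hA : MeasurableSet A) (hB : MeasurableSet B)
    (hAn : A.Nonempty) (hBn : B.Nonempty) (hC : A + B ⊆ C) :
    volume A + volume B ≤ volume C := by
  obtain ⟨a0, ha0⟩ := hAn
  obtain ⟨b0, hb0⟩ := hBn
  rw [hA.measure_eq_iSup_isCompact, hB.measure_eq_iSup_isCompact]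
  simp only [iSup_and']
  refine ENNReal.biSup_add_biSup_le' ⟨∅, by simp⟩ ⟨∅, by simp⟩ ?_
  rintro K ⟨hK, hKc⟩ L ⟨hL, hLc⟩
  calc volume K + volume L ≤ volume (insert a0 K) + volume (insert b0 L) := by
        gcongr <;> exact Set.subset_insert _ _
    _ ≤ volume (insert a0 K + insert b0 L) :=
        bm_one_dim_compact (hKc.insert _) (hLc.insert _) (Set.insert_nonempty _ _)
          (Set.insert_nonempty _ _)
    _ ≤ volume C := by
        refine measure_mono (subset_trans (Set.add_subset_add ?_ ?_) hC)
        · exact Set.insert_subset ha0 hK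
        · exact Set.insert_subset hb0 hL

theorem pl_core {F G : ℝ → ℝ} {h : ℝ → ℝ≥0∞} {l : ℝ} (hl0 : 0 < l) (hl1 : l < 1)
    (hF : Measurable F) (hG : Measurable G) (hh : Measurable h)
    (hF0 : ∀ x, 0 ≤ F x) (hG0 : ∀ x, 0 ≤ G x) (hF1 : ∀ x, F x ≤ 1) (hG1 : ∀ x, G x ≤ 1)
    (hFs : ∀ s < 1, ∃ x, s < F x) (hGs : ∀ s < 1, ∃ x, s < G x)
    (H : ∀ x y, ENNReal.ofReal (F x) ^ (1 - l) * ENNReal.ofReal (G y) ^ l ≤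
      h ((1 - l) * x + l * y)) :
    ENNReal.ofReal (1 - l) * (∫⁻ x, ENNReal.ofReal (F x)) +
      ENNReal.ofReal l * (∫⁻ x, ENNReal.ofReal (G x)) ≤ ∫⁻ x, h x := by
  have hm : Measurable (fun x => (min (h x) 1).toReal) :=
    (hh.min measurable_const).ennreal_toReal
  calc _ = ∫⁻ t in Set.Ioi (0:ℝ), (ENNReal.ofReal (1 - l) * volume {a | t < F a} +
            ENNReal.ofReal l * volume {a | t < G a}) := by
        rw [lintegral_eq_lintegral_meas_lt _ (ae_of_all _ hF0) hF.aemeasurable,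
          lintegral_eq_lintegral_meas_lt _ (ae_of_all _ hG0) hG.aemeasurable]
        have m1 : Measurable fun t => volume {a | t < F a} :=
          (Antitone.measurable fun s t hst => measure_mono fun a (ha : t < F a) => hst.trans_lt ha)
        have m2 : Measurable fun t => volume {a | t < G a} :=
          (Antitone.measurable fun s t hst => measure_mono fun a (ha : t < G a) => hst.trans_lt ha)
        rw [lintegral_add_left (m1.const_mul _), lintegral_const_mul _ m1,
          lintegral_const_mul _ m2]
    _ ≤ ∫⁻ t in Set.Ioi (0:ℝ), volume {a | t < (min (h a) 1).toReal} := by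
        refine setLIntegral_mono' measurableSet_Ioi fun t ht => ?_
        rcases le_or_gt 1 t with h1 | h1
        · have e1 : {a | t < F a} = ∅ := by
            ext a; simpa using (hF1 a).trans h1
          have e2 : {a | t < G a} = ∅ := by
            ext a; simpa using (hG1 a).trans h1
          simp [e1, e2]
        · have s1 : ENNReal.ofReal (1 - l) * volume {a | t < F a} =
              volume ((1 - l) • {a | t < F a}) := by
            rw [Measure.addHaar_smul]; simp [abs_of_pos (sub_pos.2 hl1)]
          have s2 : ENNReal.ofReal l * volume {a | t < G a} =
              volume (l • {a | t < G a}) := by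
            rw [Measure.addHaar_smul]; simp [abs_of_pos hl0]
          rw [s1, s2]
          have t0 : (0:ℝ) < t := ht
          refine bm_one_dim' ?_ ?_ ?_ ?_ ?_
          · exact (measurableSet_lt measurable_const hF).const_smul₀ _
          · exact (measurableSet_lt measurable_const hG).const_smul₀ _
          · exact (show Set.Nonempty {a | t < F a} from hFs t h1).smul_set
          · exact (show Set.Nonempty {a | t < G a} from hGs t h1).smul_set
          · rintro _ ⟨_, ⟨x, hx, rfl⟩, _, ⟨y, hy, rfl⟩, rfl⟩
            simp only [Set.mem_ofPred_eq, smul_eq_mul] at *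
            rw [← ENNReal.ofReal_lt_iff_lt_toReal t0.le (by simp)]
            refine lt_min ?_ (by simpa using h1)
            refine lt_of_lt_of_le ?_ (H x y)
            rw [ENNReal.ofReal_rpow_of_pos (t0.trans hx), ENNReal.ofReal_rpow_of_pos (t0.trans hy),
              ← ENNReal.ofReal_mul (by have := hF0 x; positivity)]
            have hp : 0 < F x ^ (1 - l) * G y ^ l :=
              mul_pos (rpow_pos_of_pos (t0.trans hx) _) (rpow_pos_of_pos (t0.trans hy) _)
            rw [ENNReal.ofReal_lt_ofReal_iff hp]
            calc t = t ^ (1 - l) * t ^ l := by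
                  rw [← Real.rpow_add t0]; simp
              _ < _ := by
                have := Real.rpow_lt_rpow t0.le hx (sub_pos.2 hl1)
                have := Real.rpow_lt_rpow t0.le hy hl0
                have := rpow_pos_of_pos t0 l
                gcongr
    _ = ∫⁻ x, ENNReal.ofReal ((min (h x) 1).toReal) := by
        rw [lintegral_eq_lintegral_meas_lt _ (ae_of_all _ fun x => ENNReal.toReal_nonneg)
          hm.aemeasurable]
    _ ≤ ∫⁻ x, h x := by
        refine lintegral_mono fun x => ?_
        rw [ENNReal.ofReal_toReal (by simp)]
        exact min_le_left _ _

theorem ennreal_amgm {a b : ℝ≥0∞} {l : ℝ} (hl0 : 0 < l) (hl1 : l < 1) :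
    a ^ (1 - l) * b ^ l ≤ ENNReal.ofReal (1 - l) * a + ENNReal.ofReal l * b := by
  have h1 : 0 < 1 - l := sub_pos.2 hl1
  rcases eq_or_ne a ⊤ with rfl | ha
  · rw [ENNReal.mul_top (by simpa using hl1)]; simp
  rcases eq_or_ne b ⊤ with rfl | hb
  · rw [ENNReal.mul_top (by simpa using hl0)]; simp
  lift a to NNReal using ha
  lift b to NNReal using hb
  have ha : (0:ℝ) ≤ a := a.2
  have hb : (0:ℝ) ≤ b := b.2
  have := Real.geom_mean_le_arith_mean2_weighted h1.le hl0.le ha hb (by ring)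
  have h2 := ENNReal.ofReal_le_ofReal this
  rw [ENNReal.ofReal_mul (by positivity), ENNReal.ofReal_add (by positivity) (by positivity),
    ENNReal.ofReal_mul h1.le, ENNReal.ofReal_mul hl0.le,
    ← ENNReal.ofReal_rpow_of_nonneg ha h1.le, ← ENNReal.ofReal_rpow_of_nonneg hb hl0.le] at h2
  simpa using h2

theorem pl_normalize {f : ℝ → ℝ≥0∞} (hf : Measurable f) {M : ℝ≥0∞} (hM : M ≠ ⊤)
    (hfM : ∀ x, f x ≤ M) (h0 : ∫⁻ x, f x ≠ 0) :
    ∃ (c : ℝ≥0∞) (F : ℝ → ℝ), c ≠ 0 ∧ c ≠ ⊤ ∧ Measurable F ∧ (∀ x, 0 ≤ F x) ∧ (∀ x, F x ≤ 1) ∧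
      (∀ s < 1, ∃ x, s < F x) ∧ ∀ x, ENNReal.ofReal (F x) = c * f x := by
  set S := ⨆ x, f x with hS
  have hSt : S ≠ ⊤ := ne_top_of_le_ne_top hM (iSup_le hfM)
  have hS0 : S ≠ 0 := by
    intro h
    apply h0
    rw [lintegral_eq_zero_iff hf]
    refine ae_of_all _ fun x => ?_
    have : f x ≤ S := le_iSup f x
    simpa [h] using this
  have hle : ∀ x, S⁻¹ * f x ≤ 1 := fun x => by
    calc S⁻¹ * f x ≤ S⁻¹ * S := by gcongr; exact le_iSup f x
      _ = 1 := ENNReal.inv_mul_cancel hS0 hSt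
  have hnt : ∀ x, S⁻¹ * f x ≠ ⊤ := fun x => ne_top_of_le_ne_top (by simp) (hle x)
  refine ⟨S⁻¹, fun x => (S⁻¹ * f x).toReal, by simpa using hSt, by simpa using hS0,
    (hf.const_mul _).ennreal_toReal, fun x => ENNReal.toReal_nonneg, fun x => ?_, ?_, ?_⟩
  · exact ENNReal.toReal_le_of_le_ofReal zero_le_one (by simpa using hle x)
  · intro s hs
    by_contra! hc
    have h3 : S⁻¹ * S ≤ ENNReal.ofReal s := by
      rw [hS, ENNReal.mul_iSup]
      refine iSup_le fun x => ?_
      rw [← hS, ← ENNReal.ofReal_toReal (hnt x)]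
      exact ENNReal.ofReal_le_ofReal (hc x)
    rw [ENNReal.inv_mul_cancel hS0 hSt] at h3
    have := ENNReal.one_le_ofReal.1 h3
    linarith
  · intro x
    exact ENNReal.ofReal_toReal (hnt x)

theorem pl_bdd {f g h : ℝ → ℝ≥0∞} {l : ℝ} (hl0 : 0 < l) (hl1 : l < 1)
    (hf : Measurable f) (hg : Measurable g) (hh : Measurable h) {M : ℝ≥0∞} (hM : M ≠ ⊤)
    (hfM : ∀ x, f x ≤ M) (hgM : ∀ x, g x ≤ M)
    (H : ∀ x y, f x ^ (1 - l) * g y ^ l ≤ h ((1 - l) * x + l * y)) :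
    (∫⁻ x, f x) ^ (1 - l) * (∫⁻ x, g x) ^ l ≤ ∫⁻ x, h x := by
  have h1 : 0 < 1 - l := sub_pos.2 hl1
  rcases eq_or_ne (∫⁻ x, f x) 0 with f0 | f0
  · simp [f0, ENNReal.zero_rpow_of_pos h1]
  rcases eq_or_ne (∫⁻ x, g x) 0 with g0 | g0
  · simp [g0, ENNReal.zero_rpow_of_pos hl0]
  obtain ⟨c, F, c0, ct, mF, F0, F1, Fs, hF⟩ := pl_normalize hf hM hfM f0
  obtain ⟨d, G, d0, dt, mG, G0, G1, Gs, hG⟩ := pl_normalize hg hM hgM g0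
  set K : ℝ≥0∞ := c ^ (1 - l) * d ^ l with hK
  have K0 : K ≠ 0 := by simp [hK, c0, d0, ct, dt]
  have Kt : K ≠ ⊤ := ENNReal.mul_ne_top (ENNReal.rpow_ne_top_of_nonneg h1.le ct)
    (ENNReal.rpow_ne_top_of_nonneg hl0.le dt)
  have e : ∀ a b : ℝ≥0∞, (c * a) ^ (1 - l) * (d * b) ^ l = K * (a ^ (1 - l) * b ^ l) := by
    intro a b
    rw [ENNReal.mul_rpow_of_nonneg _ _ h1.le, ENNReal.mul_rpow_of_nonneg _ _ hl0.le, hK]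
    ring
  have key := pl_core (h := fun x => K * h x) hl0 hl1 mF mG (hh.const_mul _) F0 G0 F1 G1 Fs Gs (by
    intro x y
    rw [hF, hG, e]
    gcongr
    exact H x y)
  have key2 := (ennreal_amgm hl0 hl1).trans key
  simp only [hF, hG] at key2
  rw [lintegral_const_mul _ hf, lintegral_const_mul _ hg, lintegral_const_mul _ hh, e] at key2
  exact (ENNReal.mul_le_mul_iff_right K0 Kt).1 key2

theorem pl_one {f g h : ℝ → ℝ≥0∞} {l : ℝ} (hl0 : 0 < l) (hl1 : l < 1)
    (hf : Measurable f) (hg : Measurable g) (hh : Measurable h)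
    (H : ∀ x y, f x ^ (1 - l) * g y ^ l ≤ h ((1 - l) * x + l * y)) :
    (∫⁻ x, f x) ^ (1 - l) * (∫⁻ x, g x) ^ l ≤ ∫⁻ x, h x := by
  have h1 : 0 < 1 - l := sub_pos.2 hl1
  rcases eq_or_ne (∫⁻ x, f x) 0 with f0 | f0
  · simp [f0, ENNReal.zero_rpow_of_pos h1]
  rcases eq_or_ne (∫⁻ x, g x) 0 with g0 | g0
  · simp [g0, ENNReal.zero_rpow_of_pos hl0]
  have T : ∀ f : ℝ → ℝ≥0∞, Measurable f →
      Tendsto (fun n : ℕ => ∫⁻ x, min (f x) n) atTop (𝓝 (∫⁻ x, f x)) := by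
    intro f hf
    refine lintegral_tendsto_of_tendsto_of_monotone
      (fun n => (hf.min measurable_const).aemeasurable) (ae_of_all _ fun x m n hmn => ?_)
      (ae_of_all _ fun x => ?_)
    · exact min_le_min le_rfl (by exact_mod_cast hmn)
    · have : Tendsto (fun n : ℕ => min (f x) (n : ℝ≥0∞)) atTop (𝓝 (min (f x) ⊤)) :=
        tendsto_const_nhds.min ENNReal.tendsto_nat_nhds_top
      simpa using this
  have T1 := ((ENNReal.continuous_rpow_const (y := 1 - l)).tendsto _).comp (T f hf)
  have T2 := ((ENNReal.continuous_rpow_const (y := l)).tendsto _).comp (T g hg)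
  have T3 := ENNReal.Tendsto.mul T1 (Or.inl (by simp [f0, h1, not_lt.2 h1.le])) T2
    (Or.inl (by simp [g0, hl0, not_lt.2 hl0.le]))
  refine le_of_tendsto' T3 fun n => ?_
  refine pl_bdd (M := n) hl0 hl1 (hf.min measurable_const) (hg.min measurable_const) hh
    (by simp) (fun x => min_le_right _ _) (fun x => min_le_right _ _) fun x y => ?_
  refine le_trans ?_ (H x y)
  gcongr
  · exact min_le_left _ _
  · exact min_le_left _ _

theorem pl_pi (n : ℕ) {l : ℝ} (hl0 : 0 < l) (hl1 : l < 1) :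
    ∀ {f g h : (Fin n → ℝ) → ℝ≥0∞},
    Measurable f → Measurable g → Measurable h →
    (∀ x y, f x ^ (1 - l) * g y ^ l ≤ h ((1 - l) • x + l • y)) →
    (∫⁻ x, f x) ^ (1 - l) * (∫⁻ x, g x) ^ l ≤ ∫⁻ x, h x := by
  induction n with
  | zero =>
    intro f g h hf hg hh H
    have E : ∀ f : (Fin 0 → ℝ) → ℝ≥0∞, Measurable f → ∫⁻ x, f x = f 0 := by
      intro f hf
      have : f = fun _ => f 0 := by ext x; rw [Subsingleton.elim x 0]
      rw [this, lintegral_const, volume_pi, Measure.pi_univ]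
      simp
    rw [E f hf, E g hg, E h hh]
    simpa using H 0 0
  | succ n ih =>
    intro f g h hf hg hh H
    have mp := (volume_preserving_piFinSuccAbove (fun _ : Fin (n + 1) => ℝ) 0).symm
    have hs : ∀ (s : ℝ) (x : Fin n → ℝ),
        (MeasurableEquiv.piFinSuccAbove (fun _ : Fin (n + 1) => ℝ) 0).symm (s, x) =
          Fin.cons s x := by
      intro s x
      simp [MeasurableEquiv.piFinSuccAbove, Fin.insertNthEquiv]
    have E : ∀ f : (Fin (n + 1) → ℝ) → ℝ≥0∞, Measurable f →
        ∫⁻ x, f x = ∫⁻ s : ℝ, ∫⁻ x : Fin n → ℝ, f (Fin.cons s x) := by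
      intro f hf
      rw [← mp.lintegral_comp hf, Measure.volume_eq_prod, lintegral_prod]
      · simp only [hs]
      · exact (hf.comp mp.measurable).aemeasurable
    have M2 : ∀ f : (Fin (n + 1) → ℝ) → ℝ≥0∞, Measurable f →
        Measurable fun q : ℝ × (Fin n → ℝ) => f (Fin.cons q.1 q.2) := by
      intro f hf
      have := hf.comp mp.measurable
      have e : (fun q : ℝ × (Fin n → ℝ) => f (Fin.cons q.1 q.2)) =
          f ∘ (MeasurableEquiv.piFinSuccAbove (fun _ : Fin (n + 1) => ℝ) 0).symm := by
        ext q
        exact (congrArg f (hs q.1 q.2)).symm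
      rw [e]
      exact this
    rw [E f hf, E g hg, E h hh]
    refine pl_one hl0 hl1 (M2 f hf).lintegral_prod_right' (M2 g hg).lintegral_prod_right'
      (M2 h hh).lintegral_prod_right' fun s t => ?_
    refine ih ((M2 f hf).comp measurable_prodMk_left) ((M2 g hg).comp measurable_prodMk_left)
      ((M2 h hh).comp measurable_prodMk_left) fun x y => ?_
    refine (H _ _).trans (le_of_eq ?_)
    congr 1
    ext i
    refine Fin.cases ?_ (fun j => ?_) i <;> simp

theorem bm_three {A B C : Set (Fin 3 → ℝ)} (hA : MeasurableSet A) (hB : MeasurableSet B)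
    (hC : MeasurableSet C) (hAB : A + B ⊆ C) {a b : ℝ} (ha : 0 < a) (hb : 0 < b)
    (hAv : ENNReal.ofReal (a ^ 3) ≤ volume A) (hBv : ENNReal.ofReal (b ^ 3) ≤ volume B) :
    ENNReal.ofReal ((a + b) ^ 3) ≤ volume C := by
  set l := b / (a + b) with hl
  have hab : 0 < a + b := by positivity
  have hl0 : 0 < l := by positivity
  have hl1' : 1 - l = a / (a + b) := by rw [hl]; field_simp; ring
  have h1 : 0 < 1 - l := by rw [hl1']; positivity
  have hl1 : l < 1 := by linarith
  have key := pl_pi 3 hl0 hl1 (f := ((fun x => (1 - l) • x) ⁻¹' A).indicator 1)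
    (g := ((fun x => l • x) ⁻¹' B).indicator 1) (h := C.indicator 1)
    (measurable_one.indicator ((measurable_const_smul (1 - l)) hA))
    (measurable_one.indicator ((measurable_const_smul l) hB)) (measurable_one.indicator hC) (by
      intro x y
      by_cases hx : (1 - l) • x ∈ A
      · by_cases hy : l • y ∈ B
        · have : (1 - l) • x + l • y ∈ C := hAB (Set.add_mem_add hx hy)
          simp [Set.indicator, hx, hy, this]
        · simp [Set.indicator, hy, hl0]
      · simp [Set.indicator, hx, ENNReal.zero_rpow_of_pos h1])
  rw [lintegral_indicator_one ((measurable_const_smul (1 - l)) hA),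
    lintegral_indicator_one ((measurable_const_smul l) hB), lintegral_indicator_one hC,
    Measure.addHaar_preimage_smul _ h1.ne', Measure.addHaar_preimage_smul _ hl0.ne'] at key
  refine le_trans ?_ key
  have e : ENNReal.ofReal ((a + b) ^ 3) =
      (ENNReal.ofReal |((1 - l) ^ 3)⁻¹| * ENNReal.ofReal (a ^ 3)) ^ (1 - l) *
        (ENNReal.ofReal |(l ^ 3)⁻¹| * ENNReal.ofReal (b ^ 3)) ^ l := by
    rw [← ENNReal.ofReal_mul (by positivity), ← ENNReal.ofReal_mul (by positivity)]
    have e1 : |((1 - l) ^ 3)⁻¹| * a ^ 3 = (a + b) ^ 3 := by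
      rw [abs_of_pos (by positivity), hl1']; field_simp
    have e2 : |(l ^ 3)⁻¹| * b ^ 3 = (a + b) ^ 3 := by
      rw [abs_of_pos (by positivity), hl]; field_simp
    rw [e1, e2, ← ENNReal.rpow_add _ _ (by have := pow_pos hab 3; simpa using this) (by simp)]
    simp
  rw [e]
  simp only [Module.finrank_fin_fun]
  gcongr

theorem dot3_expand (a b : Fin 3 → ℝ) : dot3 a b = a 0 * b 0 + a 1 * b 1 + a 2 * b 2 := by
  simp [dot3, Fin.sum_univ_three]

/-- Euclidean ball. -/
def eball (t : ℝ) : Set (Fin 3 → ℝ) := {x | dot3 x x < t ^ 2}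

theorem isOpen_eball (t : ℝ) : IsOpen (eball t) := by
  refine isOpen_lt ?_ continuous_const
  simp only [dot3_expand]
  fun_prop

theorem volume_eball {t : ℝ} (ht : 0 < t) :
    volume (eball t) = ENNReal.ofReal (t ^ 3 * (4 * π / 3)) := by
  have h := (PiLp.volume_preserving_ofLp (Fin 3)).measure_preimage
    (isOpen_eball t).measurableSet.nullMeasurableSet
  have e : (@WithLp.ofLp 2 (Fin 3 → ℝ)) ⁻¹' (eball t) =
      Metric.ball (0 : EuclideanSpace ℝ (Fin 3)) t := by
    ext x
    simp only [Set.mem_preimage, Metric.mem_ball, dist_zero_right, eball, Set.mem_ofPred_eq]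
    rw [EuclideanSpace.norm_eq, Real.sqrt_lt' ht, dot3]
    simp [sq]
  rw [← h, e, EuclideanSpace.volume_ball_fin_three, ← ENNReal.ofReal_pow ht.le,
    ← ENNReal.ofReal_mul (by positivity)]
  congr 1
  ring

/-- cube root of the volume of the unit ball. -/
noncomputable def bet : ℝ := (4 * π / 3) ^ (1 / 3 : ℝ)

theorem bet_pos : 0 < bet := by unfold bet; positivity

theorem bet_cube : bet ^ 3 = 4 * π / 3 := by
  unfold bet
  rw [← Real.rpow_natCast, ← Real.rpow_mul (by positivity)]
  norm_num

theorem bm_ball {A C : Set (Fin 3 → ℝ)} (hA : MeasurableSet A)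
    (hC : MeasurableSet C) {t : ℝ} (ht : 0 < t) (hAB : A + eball t ⊆ C)
    (hAf : volume A ≠ ⊤) :
    volume A + ENNReal.ofReal (3 * bet * t) * volume A ^ (2 / 3 : ℝ) ≤ volume C := by
  rcases eq_or_ne (volume A) 0 with h0 | h0
  · rw [h0]; simp
  set m := (volume A).toReal with hm
  have hmA : volume A = ENNReal.ofReal m := (ENNReal.ofReal_toReal hAf).symm
  have hm0 : 0 < m := ENNReal.toReal_pos h0 hAf
  set a := m ^ (1 / 3 : ℝ) with ha
  have ha0 : 0 < a := by positivity
  have ha3 : a ^ 3 = m := by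
    rw [ha, ← Real.rpow_natCast, ← Real.rpow_mul hm0.le]; norm_num
  have hb := bet_pos
  have key := bm_three hA (isOpen_eball t).measurableSet hC hAB ha0 (mul_pos hb ht)
    (by rw [ha3, hmA]) (by rw [volume_eball ht, mul_pow, bet_cube, mul_comm])
  refine le_trans ?_ key
  have e2 : volume A ^ (2 / 3 : ℝ) = ENNReal.ofReal (a ^ 2) := by
    rw [hmA, ENNReal.ofReal_rpow_of_pos hm0, ha, ← Real.rpow_natCast, ← Real.rpow_mul hm0.le]
    norm_num
  rw [e2, hmA, ← ENNReal.ofReal_mul (by positivity), ← ENNReal.ofReal_add hm0.le (by positivity)]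
  apply ENNReal.ofReal_le_ofReal
  rw [← ha3]
  have : 0 < bet * t := by positivity
  nlinarith [mul_pos ha0 (pow_pos this 2), pow_pos this 3]

theorem antitone_level {α : Type*} [MeasurableSpace α] (μ : Measure α) (h : α → ℝ) :
    Antitone fun t => μ {a | t < h a} :=
  fun _ t hst => measure_mono fun a (ha : t < h a) => hst.trans_lt ha

theorem sob_level {h G : (Fin 3 → ℝ) → ℝ} (hh : Measurable h) (hG : Measurable G)
    (h0 : ∀ z, 0 ≤ h z) (G0 : ∀ z, 0 ≤ G z) {S : Set (Fin 3 → ℝ)} (hS : MeasurableSet S)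
    (hSf : volume S ≠ ⊤) {M L : ℝ} (hL : 0 ≤ L) (hM : ∀ z, h z ≤ M) (hzS : ∀ z ∉ S, h z = 0)
    (hinc : ∀ t, 0 < t → t ≤ 1 → ∀ z y, y - z ∈ eball t → h y ≤ h z + t * (G z + t *
      (S.indicator (fun _ => L) z))) :
    ENNReal.ofReal (3 * bet) * ∫⁻ s in Set.Ioi (0:ℝ), volume {z | s < h z} ^ (2 / 3 : ℝ) ≤
      ∫⁻ z, ENNReal.ofReal (G z) := by
  have hb := bet_pos
  set I := ∫⁻ s in Set.Ioi (0:ℝ), volume {z | s < h z} ^ (2 / 3 : ℝ) with hI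
  have hlev : ∀ s > 0, volume {z | s < h z} ≠ ⊤ := by
    intro s hs
    refine ne_top_of_le_ne_top hSf (measure_mono fun z (hz : s < h z) => ?_)
    by_contra hc
    rw [hzS z hc] at hz
    exact absurd hz (not_lt.2 hs.le)
  have hinteg : ∫⁻ z, ENNReal.ofReal (h z) ≠ ⊤ := by
    refine ne_top_of_le_ne_top (b := ∫⁻ z, S.indicator (fun _ => ENNReal.ofReal M) z) ?_ ?_
    · rw [lintegral_indicator_const hS]
      exact ENNReal.mul_ne_top (by simp) hSf
    · refine lintegral_mono fun z => ?_
      by_cases hz : z ∈ S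
      · simpa [hz] using ENNReal.ofReal_le_ofReal (hM z)
      · simp [hzS z hz]
  have m1 : Measurable fun t => volume {a | t < h a} := (antitone_level _ h).measurable
  have hi0 : ∀ z, 0 ≤ S.indicator (fun _ => L) z := fun z => Set.indicator_nonneg (fun _ _ => hL) z
  have mi : Measurable (S.indicator (fun _ => L)) := measurable_const.indicator hS
  have step : ∀ t : ℝ, 0 < t → t ≤ 1 → ENNReal.ofReal (3 * bet) * I ≤
      (∫⁻ z, ENNReal.ofReal (G z)) + ENNReal.ofReal t * (ENNReal.ofReal L * volume S) := by
    intro t ht ht1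
    set k : (Fin 3 → ℝ) → ℝ := fun z => h z + t * (G z + t * S.indicator (fun _ => L) z) with hk
    have mk : Measurable k := hh.add ((hG.add (mi.const_mul t)).const_mul t)
    have hhk : ∀ z, h z ≤ k z := fun z => by
      have := hi0 z; have := G0 z
      simp only [hk]
      have : 0 ≤ t * (G z + t * S.indicator (fun _ => L) z) := by positivity
      linarith
    have c1 : (∫⁻ z, ENNReal.ofReal (h z)) + ENNReal.ofReal t * (ENNReal.ofReal (3 * bet) * I) ≤
        ∫⁻ z, ENNReal.ofReal (k z) := by
      rw [lintegral_eq_lintegral_meas_lt _ (ae_of_all _ h0) hh.aemeasurable,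
        lintegral_eq_lintegral_meas_lt _ (ae_of_all _ fun z => (h0 z).trans (hhk z))
          mk.aemeasurable, hI, ← mul_assoc, ← ENNReal.ofReal_mul ht.le,
        ← lintegral_const_mul _ (m1.pow_const _), ← lintegral_add_left m1]
      refine setLIntegral_mono' measurableSet_Ioi fun s hs => ?_
      have := bm_ball (A := {z | s < h z}) (C := {z | s < k z})
        (measurableSet_lt measurable_const hh) (measurableSet_lt measurable_const mk) ht
        (by
          rintro _ ⟨y, hy, w, hw, rfl⟩
          simp only [Set.mem_ofPred_eq] at hy ⊢
          refine hy.trans_le (hinc t ht ht1 (y + w) y ?_)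
          have e : y - (y + w) = - w := by abel
          rw [e]
          simpa [eball, dot3] using hw) (hlev s hs)
      rwa [mul_comm t]
    have c2 : ∫⁻ z, ENNReal.ofReal (k z) = (∫⁻ z, ENNReal.ofReal (h z)) +
        ENNReal.ofReal t * ((∫⁻ z, ENNReal.ofReal (G z)) +
          ENNReal.ofReal t * (ENNReal.ofReal L * volume S)) := by
      have e : ∀ z, ENNReal.ofReal (k z) = ENNReal.ofReal (h z) + ENNReal.ofReal t *
          (ENNReal.ofReal (G z) + ENNReal.ofReal t * S.indicator (fun _ => ENNReal.ofReal L) z) := by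
        intro z
        have e1 : S.indicator (fun _ => ENNReal.ofReal L) z =
            ENNReal.ofReal (S.indicator (fun _ => L) z) := by
          by_cases hz : z ∈ S <;> simp [hz]
        have := hi0 z; have := G0 z
        rw [e1, ← ENNReal.ofReal_mul ht.le, ← ENNReal.ofReal_add (G0 z) (by positivity),
          ← ENNReal.ofReal_mul ht.le, ← ENNReal.ofReal_add (h0 z) (by positivity)]
      have mI : Measurable (S.indicator (fun _ => ENNReal.ofReal L)) :=
        measurable_const.indicator hS
      have mm : Measurable fun z => ENNReal.ofReal (G z) +
          ENNReal.ofReal t * S.indicator (fun _ => ENNReal.ofReal L) z :=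
        hG.ennreal_ofReal.add (mI.const_mul _)
      simp only [e]
      rw [lintegral_add_left hh.ennreal_ofReal, lintegral_const_mul _ mm, lintegral_add_left hG.ennreal_ofReal,
        lintegral_const_mul _ mI, lintegral_indicator_const hS]
    rw [c2] at c1
    have c3 := (ENNReal.add_le_add_iff_left hinteg).1 c1
    exact (ENNReal.mul_le_mul_iff_right (by simpa using ht) (by simp)).1 c3
  have T : Tendsto (fun t : ℝ => (∫⁻ z, ENNReal.ofReal (G z)) +
      ENNReal.ofReal t * (ENNReal.ofReal L * volume S)) (𝓝[>] 0)
      (𝓝 ((∫⁻ z, ENNReal.ofReal (G z)) + ENNReal.ofReal 0 * (ENNReal.ofReal L * volume S))) := by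
    refine Tendsto.mono_left ?_ nhdsWithin_le_nhds
    refine tendsto_const_nhds.add (ENNReal.Tendsto.mul_const ?_
      (Or.inr (ENNReal.mul_ne_top (by simp) hSf)))
    exact (ENNReal.continuous_ofReal.tendsto 0)
  have := ge_of_tendsto T (by
    filter_upwards [Ioc_mem_nhdsGT (zero_lt_one (α := ℝ))] with t ht
    exact step t ht.1 ht.2)
  simpa using this

theorem sob_pow {h : (Fin 3 → ℝ) → ℝ} (hh : Measurable h)
    (h0 : ∀ z, 0 ≤ h z) (hfin : ∫⁻ z, ENNReal.ofReal (h z) ^ (3 / 2 : ℝ) ≠ ⊤) :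
    (∫⁻ z, ENNReal.ofReal (h z) ^ (3 / 2 : ℝ)) ^ (2 / 3 : ℝ) ≤
    ∫⁻ s in Set.Ioi (0:ℝ), volume {z | s < h z} ^ (2 / 3 : ℝ) := by
  set P := ∫⁻ z, ENNReal.ofReal (h z) ^ (3 / 2 : ℝ) with hP
  set I := ∫⁻ s in Set.Ioi (0:ℝ), volume {z | s < h z} ^ (2 / 3 : ℝ) with hI
  rcases eq_or_ne P 0 with hP0 | hP0
  · rw [hP0]; simp
  have mho : Measurable fun z => ENNReal.ofReal (h z) := hh.ennreal_ofReal
  have mhp : Measurable fun z => ENNReal.ofReal (h z) ^ (1 / 2 : ℝ) := mho.pow_const _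
  have m1 : Measurable fun t => volume {a | t < h a} := (antitone_level _ h).measurable
  have key : P ≤ P ^ (1 / 3 : ℝ) * I := by
    calc P = ∫⁻ z, ENNReal.ofReal (h z) ∂(volume.withDensity
            (fun z => ENNReal.ofReal (h z) ^ (1 / 2 : ℝ))) := by
          rw [lintegral_withDensity_eq_lintegral_mul _ mhp mho]
          refine lintegral_congr fun z => ?_
          simp only [Pi.mul_apply]
          nth_rewrite 3 [← ENNReal.rpow_one (ENNReal.ofReal (h z))]
          rw [← ENNReal.rpow_add_of_nonneg _ _ (by norm_num) (by norm_num)]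
          norm_num
      _ = ∫⁻ s in Set.Ioi (0:ℝ), (volume.withDensity
            (fun z => ENNReal.ofReal (h z) ^ (1 / 2 : ℝ))) {z | s < h z} :=
          lintegral_eq_lintegral_meas_lt _ (ae_of_all _ h0) hh.aemeasurable
      _ ≤ ∫⁻ s in Set.Ioi (0:ℝ), P ^ (1 / 3 : ℝ) * volume {z | s < h z} ^ (2 / 3 : ℝ) := by
          refine lintegral_mono fun s => ?_
          have ms : MeasurableSet {z | s < h z} := measurableSet_lt measurable_const hh
          rw [withDensity_apply _ ms, ← lintegral_indicator ms]
          have hold := ENNReal.lintegral_mul_le_Lp_mul_Lq volume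
            (p := 3) (q := 3 / 2) (by rw [Real.holderConjugate_iff]; norm_num)
            mhp.aemeasurable ((measurable_one (α := ℝ≥0∞)).indicator ms).aemeasurable
          refine le_trans (le_of_eq ?_) (hold.trans (le_of_eq ?_))
          · refine lintegral_congr fun z => ?_
            by_cases hz : z ∈ {z | s < h z} <;> simp [Set.indicator, hz]
          · congr 1
            · congr 1
              refine lintegral_congr fun z => ?_
              rw [← ENNReal.rpow_mul]; norm_num
            · have : ∀ z, ({z | s < h z}.indicator (1 : (Fin 3 → ℝ) → ℝ≥0∞) z) ^ (3 / 2 : ℝ) =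
                  {z | s < h z}.indicator 1 z := by
                intro z
                by_cases hz : z ∈ {z | s < h z} <;> simp [Set.indicator, hz]
              simp only [this]
              rw [lintegral_indicator_one ms]
              norm_num
      _ = P ^ (1 / 3 : ℝ) * I := lintegral_const_mul _ (m1.pow_const _)
  have hP3 : P ^ (1 / 3 : ℝ) ≠ 0 := by simp [hP0, hfin]
  have hP3t : P ^ (1 / 3 : ℝ) ≠ ⊤ := ENNReal.rpow_ne_top_of_nonneg (by norm_num) hfin
  refine (ENNReal.mul_le_mul_iff_right hP3 hP3t).1 (le_trans (le_of_eq ?_) key)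
  rw [← ENNReal.rpow_add _ _ hP0 hfin]
  norm_num

theorem area_count {F : (Fin 3 → ℝ) → (Fin 3 → ℝ)} {F' : (Fin 3 → ℝ) → (Fin 3 → ℝ) →L[ℝ] (Fin 3 → ℝ)}
    (hF : ∀ q, HasFDerivAt F (F' q) q) {s : Set (Fin 3 → ℝ)} (hs : MeasurableSet s)
    (hdet : ∀ q ∈ s, (F' q).det ≠ 0) :
    ∃ N : (Fin 3 → ℝ) → ℝ≥0∞, Measurable N ∧ (∀ z, ∃ k : ℕ, (N z).toReal = k) ∧
      ∀ ψ : (Fin 3 → ℝ) → ℝ≥0∞, Measurable ψ →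
        ∫⁻ z, ψ z * N z = ∫⁻ q in s, ENNReal.ofReal |(F' q).det| * ψ (F q) := by
  rcases s.eq_empty_or_nonempty with rfl | hne
  · exact ⟨fun _ => 0, measurable_const, fun z => ⟨0, by simp⟩, by simp⟩
  classical
  let r : ((Fin 3 → ℝ) →L[ℝ] (Fin 3 → ℝ)) → ℝ≥0 := fun A =>
    if h : A.det ≠ 0 then ‖((A.toContinuousLinearEquivOfDetNeZero h).symm :
      (Fin 3 → ℝ) →L[ℝ] (Fin 3 → ℝ))‖₊⁻¹ / 2 else 1
  have hN : ∀ B : (Fin 3 → ℝ) ≃L[ℝ] (Fin 3 → ℝ),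
      0 < ‖(B.symm : (Fin 3 → ℝ) →L[ℝ] (Fin 3 → ℝ))‖₊⁻¹ := fun B => by
    have := B.nnnorm_symm_pos
    exact inv_pos.2 this
  have rpos : ∀ A, r A ≠ 0 := by
    intro A
    by_cases h : A.det ≠ 0
    · simp only [r, h, dif_pos, ne_eq, not_false_eq_true]
      exact (half_pos (hN _)).ne'
    · simp only [r, h, dif_neg, not_false_eq_true]
      exact one_ne_zero
  obtain ⟨t, A, tdisj, tm, tcov, tapp, tA⟩ :=
    exists_partition_approximatesLinearOn_of_hasFDerivWithinAt F s F'
      (fun x _ => (hF x).hasFDerivWithinAt) r rpos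
  have hm : ∀ n, MeasurableSet (s ∩ t n) := fun n => hs.inter (tm n)
  have hder : ∀ n, ∀ x ∈ s ∩ t n, HasFDerivWithinAt F (F' x) (s ∩ t n) x :=
    fun n x _ => (hF x).hasFDerivWithinAt
  have hinj : ∀ n, Set.InjOn F (s ∩ t n) := by
    intro n
    obtain ⟨y, hy, hAy⟩ := tA hne n
    have hd : (A n).det ≠ 0 := by rw [hAy]; exact hdet y hy
    have h1 := tapp n
    have h2 : r (A n) = ‖(((A n).toContinuousLinearEquivOfDetNeZero hd).symm :
      (Fin 3 → ℝ) →L[ℝ] (Fin 3 → ℝ))‖₊⁻¹ / 2 := by simp [r, hd]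
    rw [h2] at h1
    have h3 : ApproximatesLinearOn F (((A n).toContinuousLinearEquivOfDetNeZero hd :
      (Fin 3 → ℝ) ≃L[ℝ] (Fin 3 → ℝ)) : (Fin 3 → ℝ) →L[ℝ] (Fin 3 → ℝ)) (s ∩ t n) _ := h1
    exact h3.injOn (Or.inr (NNReal.half_lt_self (hN _).ne'))
  have him : ∀ n, MeasurableSet (F '' (s ∩ t n)) := fun n =>
    measurable_image_of_fderivWithin (hm n) (hder n) (hinj n)
  have mind : ∀ n, Measurable ((F '' (s ∩ t n)).indicator (1 : (Fin 3 → ℝ) → ℝ≥0∞)) :=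
    fun n => measurable_one.indicator (him n)
  refine ⟨fun z => ∑' n, (F '' (s ∩ t n)).indicator 1 z, Measurable.tsum mind, ?_, ?_⟩
  · intro z
    have e : ∑' n, (F '' (s ∩ t n)).indicator (1 : (Fin 3 → ℝ) → ℝ≥0∞) z =
        ({n | z ∈ F '' (s ∩ t n)}.encard : ℝ≥0∞) := by
      rw [← ENNReal.tsum_set_one, tsum_subtype {n | z ∈ F '' (s ∩ t n)} (fun _ => (1 : ℝ≥0∞))]
      rfl
    beta_reduce
    rw [e]
    generalize Set.encard {n | z ∈ F '' (s ∩ t n)} = c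
    induction c with
    | top => exact ⟨0, by simp⟩
    | coe c => exact ⟨c, by simp⟩
  · intro ψ hψ
    have hsU : s = ⋃ n, s ∩ t n := by
      rw [← Set.inter_iUnion]; exact (Set.inter_eq_left.2 tcov).symm
    calc ∫⁻ z, ψ z * ∑' n, (F '' (s ∩ t n)).indicator 1 z
        = ∫⁻ z, ∑' n, ψ z * (F '' (s ∩ t n)).indicator 1 z := by
          simp only [ENNReal.tsum_mul_left]
      _ = ∑' n, ∫⁻ z, ψ z * (F '' (s ∩ t n)).indicator 1 z :=
          lintegral_tsum fun n => (hψ.mul (mind n)).aemeasurable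
      _ = ∑' n, ∫⁻ q in s ∩ t n, ENNReal.ofReal |(F' q).det| * ψ (F q) := by
          congr 1
          ext n
          rw [← lintegral_image_eq_lintegral_abs_det_fderiv_mul volume (hm n) (hder n) (hinj n),
            ← lintegral_indicator (him n)]
          refine lintegral_congr fun z => ?_
          by_cases hz : z ∈ F '' (s ∩ t n) <;> simp [Set.indicator, hz]
      _ = ∫⁻ q in s, ENNReal.ofReal |(F' q).det| * ψ (F q) := by
          conv_rhs => rw [hsU]
          rw [lintegral_iUnion hm]
          exact tdisj.mono fun i j h => h.mono Set.inter_subset_right Set.inter_subset_right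

theorem area_count_integral {F : (Fin 3 → ℝ) → (Fin 3 → ℝ)}
    {F' : (Fin 3 → ℝ) → (Fin 3 → ℝ) →L[ℝ] (Fin 3 → ℝ)}
    (hF : ∀ q, HasFDerivAt F (F' q) q) (hF' : Continuous F')
    {s : Set (Fin 3 → ℝ)} (hs : MeasurableSet s)
    (hdet : ∀ q ∈ s, (F' q).det ≠ 0) (hinteg : IntegrableOn (fun q => (F' q).det) s) :
    ∃ w : (Fin 3 → ℝ) → ℝ, Integrable w ∧ (∀ z, ∃ k : ℕ, w z = k) ∧
      ∀ φ : (Fin 3 → ℝ) → ℝ, Continuous φ →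
        ∫ z, φ z * w z = ∫ q in s, φ (F q) * |(F' q).det| := by
  obtain ⟨N, mN, hN, H⟩ := area_count hF hs hdet
  have mF : Measurable F := (continuous_iff_continuousAt.2 fun q => (hF q).continuousAt).measurable
  have md : Measurable fun q => (F' q).det :=
    (ContinuousLinearMap.continuous_det.comp hF').measurable
  have mo : Measurable fun q => ENNReal.ofReal |(F' q).det| := md.abs.ennreal_ofReal
  have hfin : ∫⁻ z, N z ≠ ⊤ := by
    have := H 1 measurable_one
    simp only [Pi.one_apply, one_mul, mul_one] at this
    rw [this]
    have h2 := hinteg.abs.lintegral_lt_top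
    exact h2.ne
  have hae : ∀ᵐ z, N z < ⊤ := ae_lt_top mN hfin
  have hmeas : volume.withDensity N =
      Measure.map F ((volume.restrict s).withDensity fun q => ENNReal.ofReal |(F' q).det|) := by
    ext B hB
    rw [withDensity_apply _ hB, Measure.map_apply mF hB, withDensity_apply _ (mF hB),
      ← lintegral_indicator hB, ← lintegral_indicator (mF hB)]
    have := H (B.indicator 1) (measurable_one.indicator hB)
    refine Eq.trans ?_ (this.trans ?_)
    · refine lintegral_congr fun z => ?_
      by_cases hz : z ∈ B <;> simp [hz]
    · refine lintegral_congr fun z => ?_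
      by_cases hz : F z ∈ B <;> simp [Set.indicator, hz]
  refine ⟨fun z => (N z).toReal, integrable_toReal_of_lintegral_ne_top mN.aemeasurable hfin, hN, ?_⟩
  intro φ hφ
  have h1 := integral_withDensity_eq_integral_toReal_smul mN hae φ
  have h2 := integral_withDensity_eq_integral_toReal_smul (μ := volume.restrict s) mo
    (ae_of_all _ fun q => ENNReal.ofReal_lt_top) (fun q => φ (F q))
  rw [hmeas, integral_map mF.aemeasurable hφ.aestronglyMeasurable, h2] at h1
  simp only [smul_eq_mul, ENNReal.toReal_ofReal (abs_nonneg _)] at h1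
  simp only [mul_comm (φ _)]
  exact h1.symm

theorem degree_exists {F : (Fin 3 → ℝ) → (Fin 3 → ℝ)}
    {F' : (Fin 3 → ℝ) → (Fin 3 → ℝ) →L[ℝ] (Fin 3 → ℝ)}
    (hF : ∀ q, HasFDerivAt F (F' q) q) (hF' : Continuous F')
    {Q : Set (Fin 3 → ℝ)} (hQ : MeasurableSet Q)
    (hinteg : IntegrableOn (fun q => (F' q).det) Q) :
    ∃ w : (Fin 3 → ℝ) → ℝ, Integrable w ∧ (∀ z, w z = 0 ∨ 1 ≤ |w z|) ∧
      ∀ φ : (Fin 3 → ℝ) → ℝ, Continuous φ → (∃ C, ∀ z, |φ z| ≤ C) →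
        ∫ z, φ z * w z = ∫ q in Q, φ (F q) * (F' q).det := by
  have cd : Continuous fun q => (F' q).det := ContinuousLinearMap.continuous_det.comp hF'
  have cF : Continuous F := continuous_iff_continuousAt.2 fun q => (hF q).continuousAt
  set P := {q | 0 < (F' q).det} with hP
  set M := {q | (F' q).det < 0} with hM
  have mP : MeasurableSet P := (isOpen_lt continuous_const cd).measurableSet
  have mM : MeasurableSet M := (isOpen_lt cd continuous_const).measurableSet
  obtain ⟨w1, i1, k1, H1⟩ := area_count_integral hF hF' (hQ.inter mP)
    (fun q hq => ne_of_gt hq.2) (hinteg.mono_set Set.inter_subset_left)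
  obtain ⟨w2, i2, k2, H2⟩ := area_count_integral hF hF' (hQ.inter mM)
    (fun q hq => ne_of_lt hq.2) (hinteg.mono_set Set.inter_subset_left)
  refine ⟨fun z => w1 z - w2 z, i1.sub i2, fun z => ?_, fun φ hφ ⟨C, hC⟩ => ?_⟩
  · obtain ⟨k, hk⟩ := k1 z
    obtain ⟨m, hm⟩ := k2 z
    beta_reduce
    rw [hk, hm]
    rcases eq_or_ne ((k : ℤ) - m) 0 with h | h
    · left; exact_mod_cast h
    · right; exact_mod_cast Int.one_le_abs h
  · have b1 : Integrable fun z => φ z * w1 z := i1.bdd_mul hφ.aestronglyMeasurable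
      (ae_of_all _ (by simpa using hC))
    have b2 : Integrable fun z => φ z * w2 z := i2.bdd_mul hφ.aestronglyMeasurable
      (ae_of_all _ (by simpa using hC))
    have b3 : Integrable (fun q => φ (F q) * (F' q).det) (volume.restrict Q) :=
      hinteg.bdd_mul (hφ.comp cF).aestronglyMeasurable
        (ae_of_all _ (by simpa using fun q => hC (F q)))
    simp only [mul_sub]
    rw [integral_sub b1 b2, H1 φ hφ, H2 φ hφ, ← integral_indicator (hQ.inter mP),
      ← integral_indicator (hQ.inter mM), ← integral_indicator hQ, ← integral_sub]
    · congr 1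
      ext q
      by_cases hq : q ∈ Q
      · rcases lt_trichotomy ((F' q).det) 0 with h | h | h
        · simp [Set.indicator, hq, hP, hM, h, not_lt.2 h.le, abs_of_neg h]
        · simp [Set.indicator, hq, hP, hM, h]
        · simp [Set.indicator, hq, hP, hM, h, not_lt.2 h.le, abs_of_pos h]
      · simp [Set.indicator, hq]
    · rw [integrable_indicator_iff (hQ.inter mP)]
      exact (hinteg.mono_set Set.inter_subset_left).abs.bdd_mul (hφ.comp cF).aestronglyMeasurable
        (ae_of_all _ (by simpa using fun q => hC (F q)))
    · rw [integrable_indicator_iff (hQ.inter mM)]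
      exact (hinteg.mono_set Set.inter_subset_left).abs.bdd_mul (hφ.comp cF).aestronglyMeasurable
        (ae_of_all _ (by simpa using fun q => hC (F q)))

/-- The triple product in coordinates. -/
def tri (a b c : Fin 3 → ℝ) : ℝ :=
  a 0 * (b 1 * c 2 - b 2 * c 1) + a 1 * (b 2 * c 0 - b 0 * c 2) + a 2 * (b 0 * c 1 - b 1 * c 0)

theorem dot3_cross (a b c : Fin 3 → ℝ) : dot3 a (crossProduct b c) = tri a b c := by
  rw [dot3_expand, tri]
  simp [cross_apply]

theorem continuous_tri {Y : Type*} [TopologicalSpace Y] {a b c : Y → Fin 3 → ℝ}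
    (ha : Continuous a) (hb : Continuous b) (hc : Continuous c) :
    Continuous fun y => tri (a y) (b y) (c y) := by
  unfold tri; fun_prop

theorem hasDerivAt_tri {e : Fin 3 → ℝ} {b c : ℝ → Fin 3 → ℝ} {b' c' : Fin 3 → ℝ} {t : ℝ}
    (hb : HasDerivAt b b' t) (hc : HasDerivAt c c' t) :
    HasDerivAt (fun s => tri e (b s) (c s)) (tri e b' (c t) + tri e (b t) c') t := by
  have hb := hasDerivAt_pi.1 hb
  have hc := hasDerivAt_pi.1 hc
  have := (((((hb 1).mul (hc 2)).sub ((hb 2).mul (hc 1))).const_mul (e 0)).add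
    ((((hb 2).mul (hc 0)).sub ((hb 0).mul (hc 2))).const_mul (e 1))).add
    ((((hb 0).mul (hc 1)).sub ((hb 1).mul (hc 0))).const_mul (e 2))
  refine this.congr_deriv ?_
  simp only [tri]; ring

theorem integral_lineDeriv_zero {f f' : ℝ × ℝ → ℝ} {K : Set (ℝ × ℝ)} (hK : IsCompact K)
    (cf : Continuous f) (cf' : Continuous f') (h0 : ∀ p ∉ K, f p = 0) (h0' : ∀ p ∉ K, f' p = 0)
    (v : ℝ × ℝ) (hd : ∀ p, HasLineDerivAt ℝ f (f' p) p v) : ∫ p, f' p = 0 := by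
  have i1 : Integrable f := cf.integrable_of_hasCompactSupport (HasCompactSupport.intro hK h0)
  have i2 : Integrable f' := cf'.integrable_of_hasCompactSupport (HasCompactSupport.intro hK h0')
  have := integral_bilinear_hasLineDerivAt_right_eq_neg_left_of_integrable (μ := volume)
    (f := fun _ : ℝ × ℝ => (1:ℝ)) (f' := fun _ => 0) (g := f) (g' := f') (v := v)
    (B := ContinuousLinearMap.mul ℝ ℝ) (by simp) (by simpa using i2)
    (by simpa using i1) (fun x _ => by
      have := hasDerivAt_const (0:ℝ) (1:ℝ); exact this) (fun x _ => hd x)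
  simpa using this

theorem fderiv_lineDeriv {E : Type*} [NormedAddCommGroup E] [NormedSpace ℝ E] {g : ℝ × ℝ → E}
    (hg : Differentiable ℝ g) (p v : ℝ × ℝ) :
    HasDerivAt (fun t : ℝ => g (p + t • v)) (fderiv ℝ g p v) 0 :=
  ((hg p).hasFDerivAt.hasLineDerivAt v)

theorem stokes_plane {u : ℝ × ℝ → Fin 3 → ℝ} (hu : ContDiff ℝ (⊤ : ℕ∞) u)
    (hc : HasCompactSupport u) {φ : (Fin 3 → ℝ) → ℝ} {φ' : (Fin 3 → ℝ) → (Fin 3 → ℝ) →L[ℝ] ℝ}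
    (hφ : ∀ z, HasFDerivAt φ (φ' z) z) (hφ' : Continuous φ') (e : Fin 3 → ℝ) (l : ℝ) :
    ∫ p, φ' (l • u p) e * (l ^ 2 * tri (u p) (pderivX u p) (pderivY u p)) =
      ∫ p, (φ' (l • u p) (u p) * l ^ 2 + φ (l • u p) * (2 * l)) *
        tri e (pderivX u p) (pderivY u p) := by
  have cφ : Continuous φ := continuous_iff_continuousAt.2 fun q => (hφ q).continuousAt
  have du : Differentiable ℝ u := hu.differentiable (by simp)
  have hX : ContDiff ℝ (⊤ : ℕ∞) (pderivX u) :=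
    (hu.fderiv_right (m := (⊤ : ℕ∞)) (by norm_cast)).clm_apply contDiff_const
  have hY : ContDiff ℝ (⊤ : ℕ∞) (pderivY u) :=
    (hu.fderiv_right (m := (⊤ : ℕ∞)) (by norm_cast)).clm_apply contDiff_const
  have dX : Differentiable ℝ (pderivX u) := hX.differentiable (by simp)
  have dY : Differentiable ℝ (pderivY u) := hY.differentiable (by simp)
  set A : ℝ × ℝ → Fin 3 → ℝ := fun p => fderiv ℝ (pderivX u) p (0, 1) with hA
  have cA : Continuous A := ((hX.continuous_fderiv (by simp)).clm_apply continuous_const)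
  have hsym : ∀ p, fderiv ℝ (pderivY u) p (1, 0) = A p := by
    intro p
    have h1 : IsSymmSndFDerivAt ℝ u p := hu.contDiffAt.isSymmSndFDerivAt (by
      simp only [minSmoothness_of_isRCLikeNormedField]
      exact WithTop.coe_le_coe.2 (le_top : (2 : ℕ∞) ≤ ⊤))
    have d1 : DifferentiableAt ℝ (fderiv ℝ u) p :=
      ((hu.fderiv_right (m := (⊤ : ℕ∞)) (by norm_cast)).differentiable (by simp)) p
    have e1 : ∀ v w : ℝ × ℝ, fderiv ℝ (fun q => fderiv ℝ u q v) p w =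
        fderiv ℝ (fderiv ℝ u) p w v := by
      intro v w
      rw [fderiv_clm_apply d1 (differentiableAt_const v)]
      simp
    simp only [hA]
    unfold pderivX pderivY
    rw [e1, e1]
    exact h1 _ _
  have cu := hu.continuous
  have cX := hX.continuous
  have cY := hY.continuous
  set K := tsupport u with hK
  have z0 : ∀ p ∉ K, u p = 0 := fun p hp => image_eq_zero_of_notMem_tsupport hp
  have zf : ∀ p ∉ K, fderiv ℝ u p = 0 := fun p hp =>
    Function.notMem_support.1 fun h => hp (support_fderiv_subset ℝ h)
  have zX : ∀ p ∉ K, pderivX u p = 0 := fun p hp => by simp [pderivX, zf p hp]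
  have zY : ∀ p ∉ K, pderivY u p = 0 := fun p hp => by simp [pderivY, zf p hp]
  have cl : Continuous fun p => l • u p := cu.const_smul l
  have tz1 : ∀ a b : Fin 3 → ℝ, tri a 0 b = 0 := by simp [tri]
  have tz2 : ∀ a b : Fin 3 → ℝ, tri a b 0 = 0 := by simp [tri]
  have tz3 : ∀ a b : Fin 3 → ℝ, tri 0 a b = 0 := by simp [tri]
  have int1 := integral_lineDeriv_zero hc (f := fun p => φ (l • u p) * tri e (pderivY u p) (u p))
    (f' := fun p => φ' (l • u p) (l • pderivX u p) * tri e (pderivY u p) (u p) +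
      φ (l • u p) * (tri e (A p) (u p) + tri e (pderivY u p) (pderivX u p)))
    ((cφ.comp cl).mul (continuous_tri continuous_const cY cu))
    ((((hφ'.comp cl).clm_apply (cX.const_smul l)).mul (continuous_tri continuous_const cY cu)).add
      ((cφ.comp cl).mul ((continuous_tri continuous_const cA cu).add
        (continuous_tri continuous_const cY cX))))
    (fun p hp => by simp [z0 p hp, tz2]) (fun p hp => by simp [z0 p hp, zX p hp, tz2])
    (1, 0) (fun p => by
      have h1 := fderiv_lineDeriv du p (1, 0)
      have h2 := fderiv_lineDeriv dY p (1, 0)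
      rw [hsym p] at h2
      have h3 : HasDerivAt (fun t : ℝ => φ (l • u (p + t • (1, 0))))
          (φ' (l • u p) (l • pderivX u p)) 0 := by
        have := HasFDerivAt.comp_hasDerivAt (0:ℝ) (hφ (l • u (p + (0:ℝ) • (1, 0))))
          (h1.const_smul l)
        simp only [zero_smul, add_zero] at this
        exact this
      have h4 := h3.mul (hasDerivAt_tri (e := e) h2 h1)
      simp only [zero_smul, add_zero] at h4
      exact h4)
  have int2 := integral_lineDeriv_zero hc (f := fun p => φ (l • u p) * tri e (u p) (pderivX u p))
    (f' := fun p => φ' (l • u p) (l • pderivY u p) * tri e (u p) (pderivX u p) +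
      φ (l • u p) * (tri e (pderivY u p) (pderivX u p) + tri e (u p) (A p)))
    ((cφ.comp cl).mul (continuous_tri continuous_const cu cX))
    ((((hφ'.comp cl).clm_apply (cY.const_smul l)).mul (continuous_tri continuous_const cu cX)).add
      ((cφ.comp cl).mul ((continuous_tri continuous_const cY cX).add
        (continuous_tri continuous_const cu cA))))
    (fun p hp => by simp [z0 p hp, tz1]) (fun p hp => by simp [z0 p hp, zX p hp, tz1, tz2])
    (0, 1) (fun p => by
      have h1 := fderiv_lineDeriv du p (0, 1)
      have h2 := fderiv_lineDeriv dX p (0, 1)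
      have h3 : HasDerivAt (fun t : ℝ => φ (l • u (p + t • (0, 1))))
          (φ' (l • u p) (l • pderivY u p)) 0 := by
        have := HasFDerivAt.comp_hasDerivAt (0:ℝ) (hφ (l • u (p + (0:ℝ) • (0, 1))))
          (h1.const_smul l)
        simp only [zero_smul, add_zero] at this
        exact this
      have h4 := h3.mul (hasDerivAt_tri (e := e) h1 h2)
      simp only [zero_smul, add_zero] at h4
      exact h4)
  have I1 : Integrable (fun p => φ' (l • u p) (l • pderivX u p) * tri e (pderivY u p) (u p) +
      φ (l • u p) * (tri e (A p) (u p) + tri e (pderivY u p) (pderivX u p))) :=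
    Continuous.integrable_of_hasCompactSupport
    ((((hφ'.comp cl).clm_apply (cX.const_smul l)).mul (continuous_tri continuous_const cY cu)).add
      ((cφ.comp cl).mul ((continuous_tri continuous_const cA cu).add
        (continuous_tri continuous_const cY cX))))
    (HasCompactSupport.intro hc (fun p hp => by simp [z0 p hp, zX p hp, tz2]))
  have I2 : Integrable (fun p => φ' (l • u p) (l • pderivY u p) * tri e (u p) (pderivX u p) +
      φ (l • u p) * (tri e (pderivY u p) (pderivX u p) + tri e (u p) (A p))) :=
    Continuous.integrable_of_hasCompactSupport
    ((((hφ'.comp cl).clm_apply (cY.const_smul l)).mul (continuous_tri continuous_const cu cX)).add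
      ((cφ.comp cl).mul ((continuous_tri continuous_const cY cX).add
        (continuous_tri continuous_const cu cA))))
    (HasCompactSupport.intro hc (fun p hp => by simp [z0 p hp, zX p hp, tz1, tz2]))
  have I3 : Integrable (fun p => (φ' (l • u p) (u p) * l ^ 2 + φ (l • u p) * (2 * l)) *
        tri e (pderivX u p) (pderivY u p)) :=
    Continuous.integrable_of_hasCompactSupport
    (((((hφ'.comp cl).clm_apply cu).mul continuous_const).add ((cφ.comp cl).mul continuous_const)).mul
      (continuous_tri continuous_const cX cY))
    (HasCompactSupport.intro hc (fun p hp => by simp [zX p hp, tz1]))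
  have hpt : ∀ p, φ' (l • u p) e * (l ^ 2 * tri (u p) (pderivX u p) (pderivY u p)) =
      l * ((φ' (l • u p) (l • pderivX u p) * tri e (pderivY u p) (u p) +
      φ (l • u p) * (tri e (A p) (u p) + tri e (pderivY u p) (pderivX u p))) +
      (φ' (l • u p) (l • pderivY u p) * tri e (u p) (pderivX u p) +
      φ (l • u p) * (tri e (pderivY u p) (pderivX u p) + tri e (u p) (A p)))) +
      (φ' (l • u p) (u p) * l ^ 2 + φ (l • u p) * (2 * l)) *
        tri e (pderivX u p) (pderivY u p) := by
    intro p
    have hv : tri (u p) (pderivX u p) (pderivY u p) • e =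
        tri e (pderivX u p) (pderivY u p) • u p + tri e (pderivY u p) (u p) • pderivX u p +
        tri e (u p) (pderivX u p) • pderivY u p := by
      ext i
      fin_cases i <;> simp [tri] <;> ring
    have hv2 := congrArg (φ' (l • u p)) hv
    simp only [map_add, map_smul, smul_eq_mul] at hv2 ⊢
    have a1 : tri e (A p) (u p) + tri e (u p) (A p) = 0 := by simp only [tri]; ring
    have a2 : tri e (pderivY u p) (pderivX u p) = - tri e (pderivX u p) (pderivY u p) := by
      simp only [tri]; ring
    rw [a2]
    linear_combination l ^ 2 * hv2 - l * φ (l • u p) * a1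
  simp_rw [hpt]
  refine (integral_add ((I1.add I2).const_mul l) I3).trans ?_
  rw [integral_const_mul]
  have : ∫ p, ((φ' (l • u p) (l • pderivX u p) * tri e (pderivY u p) (u p) +
      φ (l • u p) * (tri e (A p) (u p) + tri e (pderivY u p) (pderivX u p))) +
      (φ' (l • u p) (l • pderivY u p) * tri e (u p) (pderivX u p) +
      φ (l • u p) * (tri e (pderivY u p) (pderivX u p) + tri e (u p) (A p)))) = 0 := by
    rw [integral_add I1 I2, int1, int2, add_zero]
  refine (congrArg (fun c => l * c + _) this).trans ?_
  rw [mul_zero, zero_add]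

/-- Coordinates of `ℝ³` split as `ℝ × ℝ²`. -/
def coneE (q : Fin 3 → ℝ) : ℝ × (ℝ × ℝ) := (q 0, (q 1, q 2))

theorem continuous_coneE : Continuous coneE := by unfold coneE; fun_prop

theorem coneE_mp : MeasurePreserving coneE volume volume ∧ MeasurableEmbedding coneE := by
  have h1 := volume_preserving_piFinSuccAbove (fun _ : Fin 3 => ℝ) 0
  have h2 := (MeasurePreserving.id (volume : Measure ℝ)).prod (volume_preserving_finTwoArrow ℝ)
  have h3 := h2.comp h1
  let E : (Fin 3 → ℝ) ≃ᵐ ℝ × (ℝ × ℝ) := (MeasurableEquiv.piFinSuccAbove (fun _ : Fin 3 => ℝ) 0).trans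
    ((MeasurableEquiv.refl ℝ).prodCongr MeasurableEquiv.finTwoArrow)
  have e1 : coneE = E := by
    funext q; rfl
  refine ⟨?_, ?_⟩
  · exact h3
  · rw [e1]; exact E.measurableEmbedding

/-- The slab. -/
def slab : Set (Fin 3 → ℝ) := coneE ⁻¹' (Set.Ioc 0 1 ×ˢ Set.univ)

theorem measurableSet_slab : MeasurableSet slab :=
  coneE_mp.1.measurable (measurableSet_Ioc.prod MeasurableSet.univ)

theorem slab_integrable {g : ℝ × (ℝ × ℝ) → ℝ} (hg : Continuous g) {K : Set (ℝ × ℝ)}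
    (hK : IsCompact K) (h0 : ∀ l, ∀ p ∉ K, g (l, p) = 0) :
    IntegrableOn g (Set.Ioc (0:ℝ) 1 ×ˢ Set.univ) := by
  have h1 : IntegrableOn g (Set.Icc (0:ℝ) 1 ×ˢ K) :=
    hg.continuousOn.integrableOn_compact (isCompact_Icc.prod hK)
  refine h1.of_forall_sdiff_eq_zero (measurableSet_Ioc.prod MeasurableSet.univ) ?_
  rintro ⟨l, p⟩ ⟨⟨hl, -⟩, hx⟩
  refine h0 l p fun hp => hx ⟨⟨hl.1.le, hl.2⟩, hp⟩

theorem slab_integrableOn {g : ℝ × (ℝ × ℝ) → ℝ} (hg : Continuous g) {K : Set (ℝ × ℝ)}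
    (hK : IsCompact K) (h0 : ∀ l, ∀ p ∉ K, g (l, p) = 0) :
    IntegrableOn (fun q => g (coneE q)) slab :=
  (coneE_mp.1.integrableOn_comp_preimage coneE_mp.2).2 (slab_integrable hg hK h0)

theorem slab_integral {g : ℝ × (ℝ × ℝ) → ℝ} (hg : Continuous g) {K : Set (ℝ × ℝ)}
    (hK : IsCompact K) (h0 : ∀ l, ∀ p ∉ K, g (l, p) = 0) :
    ∫ q in slab, g (coneE q) = ∫ l in Set.Ioc (0:ℝ) 1, ∫ p, g (l, p) := by
  unfold slab
  rw [coneE_mp.1.setIntegral_preimage_emb coneE_mp.2]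
  have := setIntegral_prod g (slab_integrable hg hK h0)
  rw [Measure.restrict_univ] at this
  exact this

theorem slab_swap {g : ℝ × (ℝ × ℝ) → ℝ} (hg : Continuous g) {K : Set (ℝ × ℝ)}
    (hK : IsCompact K) (h0 : ∀ l, ∀ p ∉ K, g (l, p) = 0) :
    ∫ l in Set.Ioc (0:ℝ) 1, ∫ p, g (l, p) = ∫ p, ∫ l in Set.Ioc (0:ℝ) 1, g (l, p) := by
  have := slab_integrable hg hK h0
  refine integral_integral_swap (f := fun l p => g (l, p)) ?_
  have e := Measure.prod_restrict (μ := (volume : Measure ℝ)) (ν := (volume : Measure (ℝ × ℝ)))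
    (Set.Ioc (0:ℝ) 1) Set.univ
  rw [Measure.restrict_univ] at e
  rw [e]
  exact this

theorem stokes {u : ℝ × ℝ → Fin 3 → ℝ} (hu : ContDiff ℝ (⊤ : ℕ∞) u)
    (hc : HasCompactSupport u) {φ : (Fin 3 → ℝ) → ℝ} {φ' : (Fin 3 → ℝ) → (Fin 3 → ℝ) →L[ℝ] ℝ}
    (hφ : ∀ z, HasFDerivAt φ (φ' z) z) (hφ' : Continuous φ') (e : Fin 3 → ℝ) :
    ∫ q in slab, φ' (q 0 • u (q 1, q 2)) e *
        (q 0 ^ 2 * tri (u (q 1, q 2)) (pderivX u (q 1, q 2)) (pderivY u (q 1, q 2))) =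
      ∫ p, φ (u p) * tri e (pderivX u p) (pderivY u p) := by
  have cφ : Continuous φ := continuous_iff_continuousAt.2 fun q => (hφ q).continuousAt
  have cu := hu.continuous
  have hf := (hu.continuous_fderiv (by simp))
  have cX : Continuous (pderivX u) := hf.clm_apply continuous_const
  have cY : Continuous (pderivY u) := hf.clm_apply continuous_const
  have zf : ∀ p ∉ tsupport u, fderiv ℝ u p = 0 := fun p hp =>
    Function.notMem_support.1 fun h => hp (support_fderiv_subset ℝ h)
  have zX : ∀ p ∉ tsupport u, pderivX u p = 0 := fun p hp => by simp [pderivX, zf p hp]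
  have tz1 : ∀ a b : Fin 3 → ℝ, tri a 0 b = 0 := by simp [tri]
  have cl : Continuous fun x : ℝ × (ℝ × ℝ) => x.1 • u x.2 := by fun_prop
  have key := slab_integral (g := fun x => φ' (x.1 • u x.2) e *
      (x.1 ^ 2 * tri (u x.2) (pderivX u x.2) (pderivY u x.2)))
    (((hφ'.comp cl).clm_apply continuous_const).mul ((continuous_fst.pow 2).mul
      (continuous_tri (cu.comp continuous_snd) (cX.comp continuous_snd) (cY.comp continuous_snd))))
    hc (fun l p hp => by simp [zX p hp, tz1])
  refine key.trans ?_
  dsimp only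
  simp_rw [stokes_plane hu hc hφ hφ' e]
  have key2 := slab_swap (g := fun x => (φ' (x.1 • u x.2) (u x.2) * x.1 ^ 2 +
      φ (x.1 • u x.2) * (2 * x.1)) * tri e (pderivX u x.2) (pderivY u x.2))
    (((((hφ'.comp cl).clm_apply (cu.comp continuous_snd)).mul (continuous_fst.pow 2)).add
      ((cφ.comp cl).mul (by fun_prop))).mul
      (continuous_tri continuous_const (cX.comp continuous_snd) (cY.comp continuous_snd)))
    hc (fun l p hp => by simp [zX p hp, tz1])
  refine key2.trans ?_
  dsimp only
  congr 1
  ext p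
  rw [integral_mul_const]
  congr 1
  rw [← intervalIntegral.integral_of_le zero_le_one]
  have := intervalIntegral.integral_eq_sub_of_hasDerivAt (a := 0) (b := 1)
    (f := fun l => φ (l • u p) * l ^ 2)
    (f' := fun l => (φ' (l • u p) (u p) * l ^ 2 + φ (l • u p) * (2 * l))) (fun l _ => by
      have h1 : HasDerivAt (fun l : ℝ => l • u p) (u p) l := by
        simpa using (hasDerivAt_id l).smul_const (u p)
      have h2 := (hφ (l • u p)).comp_hasDerivAt l h1
      have h3 := h2.mul (hasDerivAt_pow 2 l)
      refine h3.congr_deriv ?_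
      simp) (Continuous.intervalIntegrable (by
        have c1 : Continuous fun l : ℝ => l • u p := by fun_prop
        exact (((hφ'.comp c1).clm_apply continuous_const).mul (continuous_pow 2)).add
          ((cφ.comp c1).mul (by fun_prop))) _ _)
  rw [this]
  simp

/-- The cone map. -/
def coneF (u : ℝ × ℝ → Fin 3 → ℝ) (q : Fin 3 → ℝ) : Fin 3 → ℝ := q 0 • u (q 1, q 2)

noncomputable def coneF' (u : ℝ × ℝ → Fin 3 → ℝ) (q : Fin 3 → ℝ) :
    (Fin 3 → ℝ) →L[ℝ] (Fin 3 → ℝ) :=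
  q 0 • (fderiv ℝ u (q 1, q 2)).comp
      ((ContinuousLinearMap.proj (R := ℝ) (φ := fun _ : Fin 3 => ℝ) 1).prod
        (ContinuousLinearMap.proj 2)) +
    (ContinuousLinearMap.proj (R := ℝ) (φ := fun _ : Fin 3 => ℝ) 0).smulRight (u (q 1, q 2))

theorem coneF_hasFDerivAt {u : ℝ × ℝ → Fin 3 → ℝ} (hu : Differentiable ℝ u) (q : Fin 3 → ℝ) :
    HasFDerivAt (coneF u) (coneF' u q) q := by
  have h1 : HasFDerivAt (fun q : Fin 3 → ℝ => q 0)
    (ContinuousLinearMap.proj (R := ℝ) (φ := fun _ : Fin 3 => ℝ) 0) q :=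
    (ContinuousLinearMap.proj (R := ℝ) (φ := fun _ : Fin 3 => ℝ) 0).hasFDerivAt
  have h2 : HasFDerivAt (fun q : Fin 3 → ℝ => (q 1, q 2))
    ((ContinuousLinearMap.proj (R := ℝ) (φ := fun _ : Fin 3 => ℝ) 1).prod
        (ContinuousLinearMap.proj 2)) q :=
    ((ContinuousLinearMap.proj (R := ℝ) (φ := fun _ : Fin 3 => ℝ) 1).prod
        (ContinuousLinearMap.proj 2)).hasFDerivAt
  exact h1.smul ((hu (q 1, q 2)).hasFDerivAt.comp q h2)

theorem coneF'_continuous {u : ℝ × ℝ → Fin 3 → ℝ} (hu : ContDiff ℝ (⊤ : ℕ∞) u) :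
    Continuous (coneF' u) := by
  have cu := hu.continuous
  have hf := (hu.continuous_fderiv (by simp))
  have c2 : Continuous fun q : Fin 3 → ℝ => (q 1, q 2) := by fun_prop
  unfold coneF'
  refine ((continuous_apply 0).smul ((hf.comp c2).clm_comp continuous_const)).add ?_
  exact ((ContinuousLinearMap.smulRightL ℝ (Fin 3 → ℝ) (Fin 3 → ℝ)
    (ContinuousLinearMap.proj (R := ℝ) (φ := fun _ : Fin 3 => ℝ) 0)).continuous).comp (cu.comp c2)

theorem coneF'_det (u : ℝ × ℝ → Fin 3 → ℝ) (q : Fin 3 → ℝ) :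
    (coneF' u q).det =
      q 0 ^ 2 * tri (u (q 1, q 2)) (pderivX u (q 1, q 2)) (pderivY u (q 1, q 2)) := by
  unfold ContinuousLinearMap.det
  rw [← LinearMap.det_toMatrix', Matrix.det_fin_three]
  have h00 : fderiv ℝ u (q 1, q 2) (0, 0) = 0 := map_zero _
  simp [LinearMap.toMatrix'_apply, coneF', tri, pderivX, pderivY, h00]
  ring

/-- The area density. -/
noncomputable def nrm (u : ℝ × ℝ → Fin 3 → ℝ) (p : ℝ × ℝ) : ℝ :=
  √(dot3 (crossProduct (pderivX u p) (pderivY u p)) (crossProduct (pderivX u p) (pderivY u p)))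

theorem continuous_dot3 {Y : Type*} [TopologicalSpace Y] {a b : Y → Fin 3 → ℝ}
    (ha : Continuous a) (hb : Continuous b) : Continuous fun y => dot3 (a y) (b y) := by
  simp only [dot3_expand]; fun_prop

theorem dot3_self_nonneg (a : Fin 3 → ℝ) : 0 ≤ dot3 a a := by
  rw [dot3_expand]; nlinarith [mul_self_nonneg (a 0), mul_self_nonneg (a 1), mul_self_nonneg (a 2)]

theorem abs_dot3_le (a b : Fin 3 → ℝ) : |dot3 a b| ≤ √(dot3 a a) * √(dot3 b b) := by
  rw [← Real.sqrt_mul (dot3_self_nonneg a)]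
  refine Real.abs_le_sqrt ?_
  simp only [dot3_expand]
  nlinarith [sq_nonneg (a 0 * b 1 - a 1 * b 0), sq_nonneg (a 0 * b 2 - a 2 * b 0),
    sq_nonneg (a 1 * b 2 - a 2 * b 1)]

theorem nrm_le (u : ℝ × ℝ → Fin 3 → ℝ) (p : ℝ × ℝ) :
    nrm u p ≤ (dot3 (pderivX u p) (pderivX u p) + dot3 (pderivY u p) (pderivY u p)) / 2 := by
  unfold nrm
  set a := pderivX u p
  set b := pderivY u p
  have h1 := dot3_self_nonneg a
  have h2 := dot3_self_nonneg b
  refine Real.sqrt_le_iff.2 ⟨by positivity, ?_⟩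
  have h3 : dot3 (crossProduct a b) (crossProduct a b) = dot3 a a * dot3 b b - (dot3 a b) ^ 2 := by
    simp only [dot3_expand, cross_apply]
    simp
    ring
  rw [h3]
  nlinarith [sq_nonneg (dot3 a a - dot3 b b), sq_nonneg (dot3 a b)]

theorem abs_tri_le (u : ℝ × ℝ → Fin 3 → ℝ) (p : ℝ × ℝ) (e : Fin 3 → ℝ) :
    |tri e (pderivX u p) (pderivY u p)| ≤ √(dot3 e e) * nrm u p := by
  rw [← dot3_cross]; exact abs_dot3_le _ _

theorem norm_le_sqrt_dot3 (a : Fin 3 → ℝ) : ‖a‖ ≤ √(dot3 a a) := by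
  refine (pi_norm_le_iff_of_nonneg (Real.sqrt_nonneg _)).2 fun i => ?_
  rw [Real.norm_eq_abs]
  refine Real.abs_le_sqrt ?_
  rw [dot3_expand]
  fin_cases i <;> simp <;> nlinarith [sq_nonneg (a 0), sq_nonneg (a 1), sq_nonneg (a 2)]

theorem cont_pd {u : ℝ × ℝ → Fin 3 → ℝ} (hu : ContDiff ℝ (⊤ : ℕ∞) u) :
    Continuous (pderivX u) ∧ Continuous (pderivY u) := by
  have hf := (hu.continuous_fderiv (by simp))
  exact ⟨hf.clm_apply continuous_const, hf.clm_apply continuous_const⟩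

theorem pd_zero {u : ℝ × ℝ → Fin 3 → ℝ} {p : ℝ × ℝ} (hp : p ∉ tsupport u) :
    u p = 0 ∧ pderivX u p = 0 ∧ pderivY u p = 0 := by
  have zf : fderiv ℝ u p = 0 :=
    Function.notMem_support.1 fun h => hp (support_fderiv_subset ℝ h)
  exact ⟨image_eq_zero_of_notMem_tsupport hp, by simp [pderivX, zf], by simp [pderivY, zf]⟩

theorem nrm_cont {u : ℝ × ℝ → Fin 3 → ℝ} (hu : ContDiff ℝ (⊤ : ℕ∞) u) : Continuous (nrm u) := by
  obtain ⟨cX, cY⟩ := cont_pd hu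
  have : Continuous fun p => crossProduct (pderivX u p) (pderivY u p) := by
    simp only [cross_apply]
    refine continuous_pi fun i => ?_
    fin_cases i <;> simp <;> fun_prop
  exact Real.continuous_sqrt.comp (continuous_dot3 this this)

theorem nrm_zero {u : ℝ × ℝ → Fin 3 → ℝ} {p : ℝ × ℝ} (hp : p ∉ tsupport u) : nrm u p = 0 := by
  simp [nrm, pd_zero hp, dot3_expand]

theorem nrm_int {u : ℝ × ℝ → Fin 3 → ℝ} (hu : ContDiff ℝ (⊤ : ℕ∞) u) (hc : HasCompactSupport u) :
    Integrable (nrm u) :=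
  (nrm_cont hu).integrable_of_hasCompactSupport
    (HasCompactSupport.intro hc fun _ hp => nrm_zero hp)

theorem nrm_nonneg (u : ℝ × ℝ → Fin 3 → ℝ) (p : ℝ × ℝ) : 0 ≤ nrm u p := Real.sqrt_nonneg _

theorem lipschitz_of_bump {ρ : (Fin 3 → ℝ) → ℝ} {C : ℝ≥0} (hC : LipschitzWith C ρ)
    {u : ℝ × ℝ → Fin 3 → ℝ} (hu : ContDiff ℝ (⊤ : ℕ∞) u) (hc : HasCompactSupport u)
    (y z : Fin 3 → ℝ) :
    ∫ p, ρ (y - u p) * nrm u p ≤ (∫ p, ρ (z - u p) * nrm u p) + C * ‖y - z‖ * ∫ p, nrm u p := by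
  have cρ := hC.continuous
  have cu := hu.continuous
  have hi : ∀ z, Integrable fun p => ρ (z - u p) * nrm u p := fun z =>
    Continuous.integrable_of_hasCompactSupport ((cρ.comp (by fun_prop)).mul (nrm_cont hu))
    (HasCompactSupport.intro hc fun _ hp => by simp [nrm_zero hp])
  rw [← integral_const_mul, ← integral_add (hi z) ((nrm_int hu hc).const_mul _)]
  refine integral_mono (hi y) ((hi z).add ((nrm_int hu hc).const_mul _)) fun p => ?_
  have h1 := hC.dist_le_mul (y - u p) (z - u p)
  rw [Real.dist_eq, dist_eq_norm, sub_sub_sub_cancel_right] at h1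
  have h2 := (abs_le.1 h1).2
  have h3 : ρ (y - u p) ≤ ρ (z - u p) + C * ‖y - z‖ := by linarith
  have := mul_le_mul_of_nonneg_right h3 (nrm_nonneg u p)
  dsimp only
  linarith

theorem moll_deriv {u : ℝ × ℝ → Fin 3 → ℝ} (hu : ContDiff ℝ (⊤ : ℕ∞) u)
    (hc : HasCompactSupport u) {w : (Fin 3 → ℝ) → ℝ} (hw : Integrable w)
    (hdeg : ∀ φ : (Fin 3 → ℝ) → ℝ, Continuous φ → (∃ C, ∀ z, |φ z| ≤ C) →
        ∫ z, φ z * w z = ∫ q in slab, φ (coneF u q) * (coneF' u q).det)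
    {ρ : (Fin 3 → ℝ) → ℝ} (hρ : ContDiff ℝ (⊤ : ℕ∞) ρ) (hρc : HasCompactSupport ρ)
    (ρ0 : ∀ z, 0 ≤ ρ z) (z : Fin 3 → ℝ) :
    ∃ f' : (Fin 3 → ℝ) →L[ℝ] ℝ, HasFDerivAt (fun z => ∫ x, ρ (z - x) * w x) f' z ∧
      ∀ e, |f' e| ≤ √(dot3 e e) * ∫ p, ρ (z - u p) * nrm u p := by
  have h1 := hρc.hasFDerivAt_convolution_left (ContinuousLinearMap.mul ℝ ℝ) (μ := volume)
    (hρ.of_le (by simp)) hw.locallyIntegrable z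
  have e0 : (convolution ρ w (ContinuousLinearMap.mul ℝ ℝ) volume) =
      fun z => ∫ x, ρ (z - x) * w x := by
    funext z
    exact convolution_eq_swap _
  rw [e0] at h1
  refine ⟨_, h1, fun e => ?_⟩
  have cdρ : Continuous (fderiv ℝ ρ) := hρ.continuous_fderiv (by simp)
  have cρ := hρ.continuous
  have cu := hu.continuous
  have hex := (hρc.fderiv ℝ).convolutionExists_left
    ((ContinuousLinearMap.mul ℝ ℝ).precompL (Fin 3 → ℝ)) cdρ hw.locallyIntegrable z
  have e1 : (convolution (fderiv ℝ ρ) w ((ContinuousLinearMap.mul ℝ ℝ).precompL (Fin 3 → ℝ)) volume) z e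
      = ∫ x, (fderiv ℝ ρ (z - x) e) * w x := by
    rw [convolution_eq_swap, ContinuousLinearMap.integral_apply]
    · rfl
    · exact hex.integrable_swap
  rw [e1]
  obtain ⟨C, hC⟩ := (hρc.fderiv ℝ).exists_bound_of_continuous cdρ
  rw [hdeg (fun x => fderiv ℝ ρ (z - x) e)
    ((cdρ.comp (by fun_prop)).clm_apply continuous_const)
    ⟨C * ‖e‖, fun x => ((fderiv ℝ ρ (z - x)).le_opNorm e).trans
      (mul_le_mul_of_nonneg_right (hC _) (norm_nonneg _))⟩]
  have hst := stokes hu hc (φ := fun x => ρ (z - x)) (φ' := fun x => - fderiv ℝ ρ (z - x))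
    (fun x => by
      have h2 : HasFDerivAt (fun x : Fin 3 → ℝ => z - x) (-(ContinuousLinearMap.id ℝ _)) x :=
        (hasFDerivAt_id x).const_sub z
      have h3 := ((hρ.differentiable (by simp)) (z - x)).hasFDerivAt.comp x h2
      refine h3.congr_fderiv ?_
      ext v; simp) (cdρ.comp (by fun_prop)).neg e
  simp only [coneF'_det]
  have e2 : ∫ q in slab, (fderiv ℝ ρ (z - coneF u q) e) *
      (q 0 ^ 2 * tri (u (q 1, q 2)) (pderivX u (q 1, q 2)) (pderivY u (q 1, q 2))) =
      - ∫ p, ρ (z - u p) * tri e (pderivX u p) (pderivY u p) := by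
    rw [← hst, ← integral_neg]
    congr 1
    ext q
    simp [coneF]
  rw [e2, abs_neg, ← integral_const_mul]
  refine (abs_integral_le_integral_abs).trans ?_
  refine integral_mono_of_nonneg (ae_of_all _ fun p => abs_nonneg _) ?_ (ae_of_all _ fun p => ?_)
  · exact Integrable.const_mul
      (Continuous.integrable_of_hasCompactSupport ((cρ.comp (by fun_prop)).mul (nrm_cont hu))
    (HasCompactSupport.intro hc fun _ hp => by simp [nrm_zero hp])) _
  · dsimp only
    rw [abs_mul, abs_of_nonneg (ρ0 _)]
    have := mul_le_mul_of_nonneg_left (abs_tri_le u p e) (ρ0 (z - u p))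
    linarith

theorem lintegral_G_le {u : ℝ × ℝ → Fin 3 → ℝ} (hu : ContDiff ℝ (⊤ : ℕ∞) u)
    (hc : HasCompactSupport u) {ρ : (Fin 3 → ℝ) → ℝ} (cρ : Continuous ρ) (iρ : Integrable ρ)
    (ρ0 : ∀ z, 0 ≤ ρ z) (h1 : ∫ z, ρ z = 1) :
    ∫⁻ z, ENNReal.ofReal (∫ p, ρ (z - u p) * nrm u p) ≤ ENNReal.ofReal (∫ p, nrm u p) := by
  have cu := hu.continuous
  have cn := nrm_cont hu
  have hi : ∀ z, Integrable fun p => ρ (z - u p) * nrm u p := fun z =>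
    Continuous.integrable_of_hasCompactSupport ((cρ.comp (by fun_prop)).mul (nrm_cont hu))
    (HasCompactSupport.intro hc fun _ hp => by simp [nrm_zero hp])
  have e : ∀ z, ENNReal.ofReal (∫ p, ρ (z - u p) * nrm u p) =
      ∫⁻ p, ENNReal.ofReal (ρ (z - u p)) * ENNReal.ofReal (nrm u p) := fun z => by
    rw [ofReal_integral_eq_lintegral_ofReal (hi z)
      (ae_of_all _ fun p => mul_nonneg (ρ0 _) (nrm_nonneg u p))]
    simp only [ENNReal.ofReal_mul (ρ0 _)]
  simp_rw [e]
  rw [lintegral_lintegral_swap]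
  · have h2 : ∀ p, ∫⁻ z, ENNReal.ofReal (ρ (z - u p)) * ENNReal.ofReal (nrm u p) =
        ENNReal.ofReal (nrm u p) := by
      intro p
      rw [lintegral_mul_const' _ _ ENNReal.ofReal_ne_top,
        lintegral_sub_right_eq_self (fun z => ENNReal.ofReal (ρ z)) (u p),
        ← ofReal_integral_eq_lintegral_ofReal iρ (ae_of_all _ ρ0), h1]
      simp
    simp_rw [h2]
    rw [ofReal_integral_eq_lintegral_ofReal (nrm_int hu hc) (ae_of_all _ (nrm_nonneg u))]
  · refine Measurable.aemeasurable ?_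
    have : Continuous fun x : (Fin 3 → ℝ) × (ℝ × ℝ) => ρ (x.1 - u x.2) := cρ.comp (by fun_prop)
    exact this.measurable.ennreal_ofReal.mul (cn.comp continuous_snd).measurable.ennreal_ofReal

theorem moll_bound {u : ℝ × ℝ → Fin 3 → ℝ} (hu : ContDiff ℝ (⊤ : ℕ∞) u)
    (hc : HasCompactSupport u) {w : (Fin 3 → ℝ) → ℝ} (hw : Integrable w)
    (hdeg : ∀ φ : (Fin 3 → ℝ) → ℝ, Continuous φ → (∃ C, ∀ z, |φ z| ≤ C) →
        ∫ z, φ z * w z = ∫ q in slab, φ (coneF u q) * (coneF' u q).det)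
    {ρ : (Fin 3 → ℝ) → ℝ} (hρ : ContDiff ℝ (⊤ : ℕ∞) ρ) (hρc : HasCompactSupport ρ)
    (ρ0 : ∀ z, 0 ≤ ρ z) (h1 : ∫ z, ρ z = 1) (hs : ∀ z, 1 < ‖z‖ → ρ z = 0) :
    ENNReal.ofReal (3 * bet) *
      (∫⁻ z, ENNReal.ofReal |∫ x, ρ (z - x) * w x| ^ (3 / 2 : ℝ)) ^ (2 / 3 : ℝ) ≤
      ENNReal.ofReal (∫ p, nrm u p) := by
  have cρ := hρ.continuous
  have cu := hu.continuous
  set f : (Fin 3 → ℝ) → ℝ := fun z => ∫ x, ρ (z - x) * w x with hf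
  set G : (Fin 3 → ℝ) → ℝ := fun z => ∫ p, ρ (z - u p) * nrm u p with hG
  have iρ : Integrable ρ := cρ.integrable_of_hasCompactSupport hρc
  obtain ⟨C, hC⟩ := hρ.lipschitzWith_of_hasCompactSupport hρc (by simp)
  obtain ⟨R, hR⟩ := hc.exists_bound_of_continuous cu
  obtain ⟨B, hB⟩ := hρc.exists_bound_of_continuous cρ
  have R0 : 0 ≤ R := (norm_nonneg _).trans (hR 0)
  have A0 : 0 ≤ ∫ p, nrm u p := integral_nonneg (nrm_nonneg u)
  have G0 : ∀ z, 0 ≤ G z := fun z => integral_nonneg fun p => mul_nonneg (ρ0 _) (nrm_nonneg u p)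
  have hd := moll_deriv hu hc hw hdeg hρ hρc ρ0
  have cf : Continuous f := continuous_iff_continuousAt.2 fun z => by
    obtain ⟨f', h, -⟩ := hd z
    exact h.continuousAt
  have cG : Continuous G := by
    have : LipschitzWith (C * Real.toNNReal (∫ p, nrm u p)) G := by
      refine LipschitzWith.of_le_add_mul _ fun y z => ?_
      refine (lipschitz_of_bump hC hu hc y z).trans (le_of_eq ?_)
      rw [dist_eq_norm, NNReal.coe_mul, Real.coe_toNNReal _ A0]
      ring
    exact this.continuous
  have fz : ∀ z, R + 1 < ‖z‖ → f z = 0 := by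
    intro z hz
    have := hdeg (fun x => ρ (z - x)) (cρ.comp (by fun_prop)) ⟨B, fun x => hB _⟩
    simp only [hf]
    rw [this]
    rw [setIntegral_eq_zero_of_forall_eq_zero]
    intro q hq
    have hq1 : q 0 ∈ Set.Ioc (0:ℝ) 1 := hq.1
    have : ‖coneF u q‖ ≤ R := by
      rw [coneF, norm_smul, Real.norm_eq_abs, abs_of_pos hq1.1]
      calc q 0 * _ ≤ 1 * R := mul_le_mul hq1.2 (hR _) (norm_nonneg _) zero_le_one
        _ = R := one_mul R
    have h3 := norm_sub_norm_le z (coneF u q)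
    rw [hs _ (by linarith), zero_mul]
  have hcf : HasCompactSupport f := HasCompactSupport.intro (isCompact_closedBall (0 : Fin 3 → ℝ) (R + 1))
    fun z hz => fz z (by simpa using hz)
  obtain ⟨M, hM⟩ := hcf.exists_bound_of_continuous cf
  set S : Set (Fin 3 → ℝ) := Metric.closedBall 0 (R + 2) with hS
  have hSf : volume S ≠ ⊤ := (isCompact_closedBall _ _).measure_lt_top.ne
  have hSm : MeasurableSet S := Metric.isClosed_closedBall.measurableSet
  have key := sob_level (h := fun z => |f z|) (G := G) cf.abs.measurable cG.measurable
    (fun z => abs_nonneg _) G0 hSm hSf (M := M) (L := C * ∫ p, nrm u p)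
    (mul_nonneg C.2 A0) hM (fun z hz => by
      rw [fz z, abs_zero]
      have : R + 2 < ‖z‖ := by simpa [hS] using hz
      linarith) (by
      intro t ht ht1 z y hy
      have hyd : √(dot3 (y - z) (y - z)) ≤ t := by
        refine Real.sqrt_le_iff.2 ⟨ht.le, le_of_lt hy⟩
      have hyn : ‖y - z‖ ≤ t := (norm_le_sqrt_dot3 _).trans hyd
      by_cases hz : z ∈ S
      · rw [Set.indicator_of_mem hz]
        have hmv : ‖f (z + (1:ℝ) • (y - z)) - f (z + (0:ℝ) • (y - z))‖ ≤
            t * (G z + t * (C * ∫ p, nrm u p)) := by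
          choose f' hf' hb using hd
          refine norm_image_sub_le_of_norm_deriv_le_segment_01'
            (f := fun s : ℝ => f (z + s • (y - z)))
            (f' := fun s : ℝ => f' (z + s • (y - z)) (y - z)) (fun s hs => ?_) (fun s hs => ?_)
          · have g1 : HasDerivAt (fun s : ℝ => z + s • (y - z)) (y - z) s := by
              simpa using ((hasDerivAt_id s).smul_const (y - z)).const_add z
            exact ((hf' (z + s • (y - z))).comp_hasDerivAt s g1).hasDerivWithinAt
          · refine (hb (z + s • (y - z)) (y - z)).trans ?_
            have l1 := lipschitz_of_bump hC hu hc (z + s • (y - z)) z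
            rw [add_sub_cancel_left, norm_smul, Real.norm_eq_abs, abs_of_nonneg hs.1] at l1
            have l2 : s * ‖y - z‖ ≤ t := by
              calc s * ‖y - z‖ ≤ 1 * t := mul_le_mul hs.2.le hyn (norm_nonneg _) zero_le_one
                _ = t := one_mul t
            have l3 : G (z + s • (y - z)) ≤ G z + t * (C * ∫ p, nrm u p) := by
              refine l1.trans ?_
              have := mul_le_mul_of_nonneg_right l2 (mul_nonneg C.2 A0)
              simp only [NNReal.val_eq_coe] at this
              simp only [hG]
              linarith
            exact mul_le_mul hyd l3 (G0 _) ht.le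
        simp only [one_smul, zero_smul, add_zero, add_sub_cancel] at hmv
        have := abs_sub_abs_le_abs_sub (f y) (f z)
        rw [Real.norm_eq_abs] at hmv
        linarith
      · have h2 : R + 2 < ‖z‖ := by simpa [hS] using hz
        have h3 := norm_sub_norm_le z y
        rw [norm_sub_rev] at h3
        rw [fz y (by linarith), abs_zero, Set.indicator_of_notMem hz]
        have := mul_nonneg ht.le (G0 z)
        have := abs_nonneg (f z)
        simp only [mul_zero, add_zero]
        linarith)
  have hfin : ∫⁻ z, ENNReal.ofReal |f z| ^ (3 / 2 : ℝ) ≠ ⊤ := by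
    refine ne_top_of_le_ne_top (b := ∫⁻ z in S, ENNReal.ofReal M ^ (3 / 2 : ℝ)) ?_ ?_
    · rw [setLIntegral_const]
      exact ENNReal.mul_ne_top (ENNReal.rpow_ne_top_of_nonneg (by norm_num) ENNReal.ofReal_ne_top) hSf
    · rw [← lintegral_indicator hSm]
      refine lintegral_mono fun z => ?_
      by_cases hz : z ∈ S
      · rw [Set.indicator_of_mem hz]
        exact ENNReal.rpow_le_rpow (ENNReal.ofReal_le_ofReal (hM z)) (by norm_num)
      · have : R + 2 < ‖z‖ := by simpa [hS] using hz
        rw [fz z (by linarith)]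
        simp
  have key2 := sob_pow (h := fun z => |f z|) cf.abs.measurable (fun z => abs_nonneg _) hfin
  calc _ ≤ _ := mul_le_mul_right key2 _
    _ ≤ _ := key
    _ ≤ _ := lintegral_G_le hu hc cρ iρ ρ0 h1

theorem sharp_iso {u : ℝ × ℝ → Fin 3 → ℝ} (hu : ContDiff ℝ (⊤ : ℕ∞) u)
    (hc : HasCompactSupport u) :
    4 * π * (∫ p, tri (u p) (pderivX u p) (pderivY u p)) ^ 2 ≤ (∫ p, nrm u p) ^ 3 := by
  obtain ⟨cX, cY⟩ := cont_pd hu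
  have cu := hu.continuous
  have cg : Continuous fun x : ℝ × (ℝ × ℝ) =>
      x.1 ^ 2 * tri (u x.2) (pderivX u x.2) (pderivY u x.2) :=
    (continuous_fst.pow 2).mul
      (continuous_tri (cu.comp continuous_snd) (cX.comp continuous_snd) (cY.comp continuous_snd))
  have zg : ∀ l : ℝ, ∀ p ∉ tsupport u, l ^ 2 * tri (u p) (pderivX u p) (pderivY u p) = 0 :=
    fun l p hp => by simp [pd_zero hp, tri]
  have hinteg : IntegrableOn (fun q => (coneF' u q).det) slab := by
    simp only [coneF'_det]
    exact slab_integrableOn cg hc zg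
  obtain ⟨w, hw, hw1, hdeg⟩ := degree_exists (coneF_hasFDerivAt (hu.differentiable (by simp)))
    (coneF'_continuous hu) measurableSet_slab hinteg
  have A0 : 0 ≤ ∫ p, nrm u p := integral_nonneg (nrm_nonneg u)
  set A := ∫ p, nrm u p with hA
  set V := ∫ p, tri (u p) (pderivX u p) (pderivY u p) with hV
  have hwV : ∫ z, w z = V / 3 := by
    have h1 := hdeg (fun _ => 1) continuous_const ⟨1, by simp⟩
    simp only [one_mul, coneF'_det] at h1
    rw [h1]
    refine (slab_integral cg hc zg).trans ?_
    simp only [integral_const_mul]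
    rw [integral_mul_const, ← intervalIntegral.integral_of_le zero_le_one, integral_pow]
    norm_num
    ring
  let φ : ℕ → ContDiffBump (0 : Fin 3 → ℝ) := fun k =>
    ⟨1 / (2 * ((k : ℝ) + 1)), 1 / ((k : ℝ) + 1), by positivity, by
      apply one_div_lt_one_div_of_lt <;> nlinarith [(Nat.cast_nonneg k : (0:ℝ) ≤ k)]⟩
  have hae := ContDiffBump.ae_convolution_tendsto_right_of_locallyIntegrable (φ := φ) (l := atTop)
    (K := 2) (g := w) (μ := volume) tendsto_one_div_add_atTop_nhds_zero_nat
    (Eventually.of_forall fun k => by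
      show 1 / ((k : ℝ) + 1) ≤ 2 * (1 / (2 * ((k : ℝ) + 1)))
      apply le_of_eq; field_simp) hw.locallyIntegrable
  set f : ℕ → (Fin 3 → ℝ) → ℝ := fun k z => ∫ x, (φ k).normed volume (z - x) * w x with hf
  have hae' : ∀ᵐ z, Tendsto (fun k => f k z) atTop (𝓝 (w z)) := by
    filter_upwards [hae] with z hz
    refine hz.congr fun k => ?_
    exact convolution_eq_swap _
  set B : ℝ≥0∞ := ENNReal.ofReal ((A / (3 * bet)) ^ (3 / 2 : ℝ)) with hB
  have b0 : 0 < 3 * bet := by have := bet_pos; positivity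
  have hk : ∀ k, ∫⁻ z, ENNReal.ofReal |f k z| ^ (3 / 2 : ℝ) ≤ B := by
    intro k
    have h := moll_bound hu hc hw hdeg (ρ := (φ k).normed volume) (φ k).contDiff_normed
      (φ k).hasCompactSupport_normed (φ k).nonneg_normed (φ k).integral_normed (fun z hz => by
        have h1 : z ∉ Function.support ((φ k).normed volume) := by
          rw [(φ k).support_normed_eq]
          have : (φ k).rOut ≤ 1 := by
            show 1 / ((k : ℝ) + 1) ≤ 1
            rw [div_le_one (by positivity)]
            linarith [(Nat.cast_nonneg k : (0:ℝ) ≤ k)]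
          simp only [Metric.mem_ball, dist_zero_right, not_lt]
          linarith
        exact Function.notMem_support.1 h1)
    set I := ∫⁻ z, ENNReal.ofReal |f k z| ^ (3 / 2 : ℝ) with hI
    have h2 : I ^ (2 / 3 : ℝ) ≤ ENNReal.ofReal (A / (3 * bet)) := by
      rw [ENNReal.ofReal_div_of_pos b0]
      rw [ENNReal.le_div_iff_mul_le (Or.inl (by simpa using b0)) (Or.inl ENNReal.ofReal_ne_top), mul_comm]
      exact h
    have h3 := ENNReal.rpow_le_rpow h2 (by norm_num : (0:ℝ) ≤ 3 / 2)
    rw [← ENNReal.rpow_mul, ENNReal.ofReal_rpow_of_nonneg (by positivity) (by norm_num)] at h3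
    norm_num at h3
    exact h3
  have hlim : ∫⁻ z, ENNReal.ofReal |w z| ^ (3 / 2 : ℝ) ≤ B := by
    have c1 : Continuous fun x : ℝ => ENNReal.ofReal |x| ^ (3 / 2 : ℝ) :=
      ENNReal.continuous_rpow_const.comp (ENNReal.continuous_ofReal.comp continuous_abs)
    have e1 : ∫⁻ z, ENNReal.ofReal |w z| ^ (3 / 2 : ℝ) =
        ∫⁻ z, liminf (fun k => ENNReal.ofReal |f k z| ^ (3 / 2 : ℝ)) atTop := by
      refine lintegral_congr_ae ?_
      filter_upwards [hae'] with z hz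
      exact (((c1.tendsto _).comp hz).liminf_eq).symm
    rw [e1]
    refine (lintegral_liminf_le' fun k => ?_).trans ?_
    · have cf : Continuous (f k) := continuous_iff_continuousAt.2 fun z => by
        obtain ⟨f', h, -⟩ := moll_deriv hu hc hw hdeg (ρ := (φ k).normed volume)
          (φ k).contDiff_normed (φ k).hasCompactSupport_normed (φ k).nonneg_normed z
        exact h.continuousAt
      exact (c1.comp cf).measurable.aemeasurable
    · exact liminf_le_of_le (by isBoundedDefault) fun b hb => by
        obtain ⟨k, hk'⟩ := hb.exists
        exact hk'.trans (hk k)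
  have hfinal : |V / 3| ≤ (A / (3 * bet)) ^ (3 / 2 : ℝ) := by
    rw [← ENNReal.ofReal_le_ofReal_iff (by positivity)]
    refine le_trans ?_ hlim
    rw [← hwV]
    calc ENNReal.ofReal |∫ z, w z| ≤ ENNReal.ofReal (∫ z, |w z|) :=
          ENNReal.ofReal_le_ofReal abs_integral_le_integral_abs
      _ = ∫⁻ z, ENNReal.ofReal |w z| :=
          ofReal_integral_eq_lintegral_ofReal hw.abs (ae_of_all _ fun z => abs_nonneg _)
      _ ≤ _ := by
          refine lintegral_mono fun z => ?_
          rcases hw1 z with h | h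
          · simp [h]
          · have : (1 : ℝ≥0∞) ≤ ENNReal.ofReal |w z| := by simpa using h
            calc ENNReal.ofReal |w z| = ENNReal.ofReal |w z| ^ (1:ℝ) := by simp
              _ ≤ _ := ENNReal.rpow_le_rpow_of_exponent_le this (by norm_num)
  have hsq : |V / 3| ^ 2 ≤ (A / (3 * bet)) ^ 3 := by
    have h1 := pow_le_pow_left₀ (abs_nonneg _) hfinal 2
    refine h1.trans (le_of_eq ?_)
    rw [← Real.rpow_natCast, ← Real.rpow_mul (by positivity), ← Real.rpow_natCast]
    norm_num
  rw [sq_abs, div_pow, div_pow, mul_pow, bet_cube] at hsq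
  rw [div_le_div_iff₀ (by norm_num) (by positivity)] at hsq
  nlinarith [hsq]

theorem sharp_dir {u : ℝ × ℝ → Fin 3 → ℝ} {Ω : Set (ℝ × ℝ)} (h : IsAdmissible Ω u) :
    32 * π * vol Ω u ^ 2 ≤ dirEnergy Ω u ^ 3 := by
  obtain ⟨hu, hc, hs⟩ := h
  obtain ⟨cX, cY⟩ := cont_pd hu
  have e1 : vol Ω u = ∫ p, tri (u p) (pderivX u p) (pderivY u p) := by
    unfold vol
    simp only [dot3_cross]
    refine setIntegral_eq_integral_of_forall_compl_eq_zero fun p hp => ?_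
    simp [pd_zero fun h => hp (hs h), tri]
  have e2 : dirEnergy Ω u =
      ∫ p, (dot3 (pderivX u p) (pderivX u p) + dot3 (pderivY u p) (pderivY u p)) := by
    unfold dirEnergy
    refine setIntegral_eq_integral_of_forall_compl_eq_zero fun p hp => ?_
    simp [pd_zero fun h => hp (hs h), dot3_expand]
  have i2 : Integrable fun p =>
      (dot3 (pderivX u p) (pderivX u p) + dot3 (pderivY u p) (pderivY u p)) :=
    ((continuous_dot3 cX cX).add (continuous_dot3 cY cY)).integrable_of_hasCompactSupport
      (HasCompactSupport.intro hc fun p hp => by simp [pd_zero hp, dot3_expand])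
  have h1 : ∫ p, nrm u p ≤ dirEnergy Ω u / 2 := by
    rw [e2, ← integral_div]
    exact integral_mono (nrm_int hu hc) (i2.div_const 2) (nrm_le u)
  have A0 : 0 ≤ ∫ p, nrm u p := integral_nonneg (nrm_nonneg u)
  have h2 := sharp_iso hu hc
  rw [← e1] at h2
  have h3 := pow_le_pow_left₀ A0 h1 3
  nlinarith

theorem pderiv_smul (u : ℝ × ℝ → Fin 3 → ℝ) (t : ℝ) (p : ℝ × ℝ) :
    pderivX (t • u) p = t • pderivX u p ∧ pderivY (t • u) p = t • pderivY u p := by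
  constructor
  · simp [pderivX, fderiv_const_smul_field]
  · simp [pderivY, fderiv_const_smul_field]

theorem dirEnergy_smul (Ω : Set (ℝ × ℝ)) (u : ℝ × ℝ → Fin 3 → ℝ) (t : ℝ) :
    dirEnergy Ω (t • u) = t ^ 2 * dirEnergy Ω u := by
  unfold dirEnergy
  rw [← integral_const_mul]
  congr 1
  ext p
  rw [(pderiv_smul u t p).1, (pderiv_smul u t p).2]
  simp only [dot3_expand, Pi.smul_apply, smul_eq_mul]
  ring

theorem vol_smul (Ω : Set (ℝ × ℝ)) (u : ℝ × ℝ → Fin 3 → ℝ) (t : ℝ) :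
    vol Ω (t • u) = t ^ 3 * vol Ω u := by
  unfold vol
  rw [← integral_const_mul]
  congr 1
  ext p
  rw [(pderiv_smul u t p).1, (pderiv_smul u t p).2, dot3_cross, dot3_cross]
  simp only [tri, Pi.smul_apply, smul_eq_mul]
  ring

theorem dirEnergy_nonneg (Ω : Set (ℝ × ℝ)) (u : ℝ × ℝ → Fin 3 → ℝ) : 0 ≤ dirEnergy Ω u :=
  integral_nonneg fun _ => add_nonneg (dot3_self_nonneg _) (dot3_self_nonneg _)

/-- Strict monotonicity of the depth function on `(0,1]`: for
`0 < δ′ < δ″ < 1` and `u` on the δ″-Nehari manifold, the rescaled map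
`v = (δ′/δ″)·u` lies on the δ′-Nehari manifold and
`E(u) − E(v) > (1 − δ″)·r(δ″)²·(δ′/δ″)·(1 − δ′/δ″)`. -/
theorem depth_strict_increase (Ω : Set (ℝ × ℝ)) (hΩ : IsOpen Ω)
    (hΩb : Bornology.IsBounded Ω) (H : ℝ) (hH : 0 < H) (δ' δ'' : ℝ)
    (h0 : 0 < δ') (h1 : δ' < δ'') (h2 : δ'' < 1)
    (u : ℝ × ℝ → Fin 3 → ℝ) (hu : IsAdmissible Ω u)
    (hne : dnorm Ω u ≠ 0) (hD : Dfun Ω H δ'' u = 0) :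
    Dfun Ω H δ' ((δ' / δ'') • u) = 0 ∧ dnorm Ω ((δ' / δ'') • u) ≠ 0 ∧
    (1 - δ'') * (rPW H δ'') ^ 2 * (δ' / δ'') * (1 - δ' / δ'') <
      Efun Ω H u - Efun Ω H ((δ' / δ'') • u) := by
  have hd : 0 < δ'' := h0.trans h1
  set t := δ' / δ'' with ht
  have t0 : 0 < t := div_pos h0 hd
  have t1 : t < 1 := (div_lt_one hd).2 h1
  have hδ' : δ' = t * δ'' := by rw [ht]; field_simp
  have hnn := dirEnergy_nonneg Ω u
  have hsh := sharp_dir hu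
  have hDp : 0 < dirEnergy Ω u := by
    refine lt_of_le_of_ne hnn fun h => hne ?_
    rw [dnorm, ← h, Real.sqrt_zero]
  unfold Dfun at hD ⊢
  unfold Efun
  unfold dnorm
  rw [dirEnergy_smul, vol_smul]
  set D := dirEnergy Ω u
  set V := vol Ω u
  refine ⟨?_, ?_, ?_⟩
  · rw [hδ']; linear_combination t ^ 3 * hD
  · exact (Real.sqrt_pos.2 (by positivity)).ne'
  · have hr : (rPW H δ'') ^ 2 = 8 * π * δ'' ^ 2 / H ^ 2 := by
      rw [rPW, div_pow, mul_pow, mul_pow, Real.sq_sqrt (by positivity)]; ring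
    have hV : V = - (δ'' * D) / (2 * H) := by field_simp; linarith
    have hrD : (rPW H δ'') ^ 2 ≤ D := by
      rw [hr, div_le_iff₀ (by positivity)]
      have e : 32 * π * V ^ 2 * H ^ 2 = D ^ 2 * (8 * π * δ'' ^ 2) := by
        rw [hV]; field_simp; ring
      have h5 : D ^ 2 * (8 * π * δ'' ^ 2) ≤ D ^ 2 * (D * H ^ 2) := by
        rw [← e]
        have := mul_le_mul_of_nonneg_right hsh (sq_nonneg H)
        linarith
      exact le_of_mul_le_mul_left h5 (by positivity)
    have hHV : H * V = - (δ'' * D) / 2 := by rw [hV]; field_simp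
    have e2 : (1 / 2 * D + 2 * H / 3 * V) - (1 / 2 * (t ^ 2 * D) + 2 * H / 3 * (t ^ 3 * V)) =
        D * ((1 - δ'') * t * (1 - t)) +
          D * ((1 - t) ^ 2 * (1 / 2 - δ'' * (1 - t) / 3)) := by
      linear_combination (2 / 3 * (1 - t ^ 3)) * hHV
    rw [e2]
    have p1 : 0 < D * ((1 - t) ^ 2 * (1 / 2 - δ'' * (1 - t) / 3)) := by
      have q1 : 0 < 1 - t := by linarith
      have q2 : δ'' * (1 - t) < 1 := by nlinarith
      have q3 : 0 < 1 / 2 - δ'' * (1 - t) / 3 := by linarith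
      positivity
    have p2 : (rPW H δ'') ^ 2 * ((1 - δ'') * t * (1 - t)) ≤ D * ((1 - δ'') * t * (1 - t)) := by
      refine mul_le_mul_of_nonneg_right hrD ?_
      exact mul_nonneg (mul_nonneg (by linarith) t0.le) (by linarith)
    nlinarith
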